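/- Let N ≅ ℤ^d be a lattice, let 𝒜 = {v_1,...,v_k} ⊂ N generate N as a group with deg(v_i) = 1 for a group homomorphism deg : N → ℤ, let Δ = conv(𝒜), K the cone over Δ, and let Σ be a simplicial fan induced by a regular triangulation of Δ with support K and all rays generated by elements of 𝒜. Then the quotients ℂ[𝚺]/Z·ℂ[𝚺], ℂ[𝚺;χ]/Z·ℂ[𝚺;χ], and ℂ[𝚺;χ]_ξ/Z·ℂ[𝚺;χ]_ξ (for any χ, ξ ∈ N⊗ℝ) are ℂ-vector spaces of dimension equal to the normalized volume of Δ, where Z = (Z_1,...,Z_d) with Z_j = Σ_{i ∈ I(𝚺)} g_j(v_i)[v_i] for a basis (g_1,...,g_d) of M = Hom(N,ℤ). -/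

import Mathlib

namespace GKZpaper

/-- The real cone spanned by the vectors `v i`, `i ∈ I`. -/
def realCone {d k : ℕ} (v : Fin k → Fin d → ℤ) (I : Finset (Fin k)) : Set (Fin d → ℝ) :=
  {x | ∃ c : Fin k → ℝ, (∀ i, 0 ≤ c i) ∧ (∀ i, i ∉ I → c i = 0) ∧
    ∀ j, x j = ∑ i, c i * (v i j : ℝ)}

/-- A (combinatorial model of a) rational simplicial fan together with the marked
lattice vectors `v i`; cones are recorded by the index sets of their generators. -/
structure StackyFan (d k : ℕ) where
  v : Fin k → Fin d → ℤ
  cones : Finset (Finset (Fin k))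
  empty_mem : ∅ ∈ cones
  downClosed : ∀ I ∈ cones, ∀ J ⊆ I, J ∈ cones
  simplicial : ∀ I ∈ cones,
    LinearIndependent ℝ (fun i : I => (fun j => (v i j : ℝ) : Fin d → ℝ))
  inter : ∀ I ∈ cones, ∀ J ∈ cones, realCone v I ∩ realCone v J = realCone v (I ∩ J)

variable {d k : ℕ}

/-- Every `v i` generates a ray of the fan. -/
def HasAllRays (F : StackyFan d k) : Prop := ∀ i, {i} ∈ F.cones

/-- The support of the fan. -/
def support (F : StackyFan d k) : Set (Fin d → ℝ) := ⋃ I ∈ F.cones, realCone F.v I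

/-- Maximal cones. -/
def IsMaxCone (F : StackyFan d k) (I : Finset (Fin k)) : Prop :=
  I ∈ F.cones ∧ ∀ J ∈ F.cones, I ⊆ J → J = I

def intPt {d : ℕ} (n : Fin d → ℤ) : Fin d → ℝ := fun j => (n j : ℝ)

/-- `Bx(σ;β)` for a complex parameter `β`: tuples `α` with `∑ αᵢ vᵢ ∈ N + β`,
`0 ≤ Re αᵢ < 1`, supported on `I`. -/
def BxCone (F : StackyFan d k) (β : Fin d → ℂ) (I : Finset (Fin k)) : Set (Fin k → ℂ) :=
  {α | (∀ i, 0 ≤ (α i).re ∧ (α i).re < 1) ∧ (∀ i, i ∉ I → α i = 0) ∧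
    ∃ n : Fin d → ℤ, ∀ j, ∑ i, α i * (F.v i j : ℂ) = (n j : ℂ) + β j}

/-- `Bx(𝚺;β)`: the union over the maximal cones. -/
def Bx (F : StackyFan d k) (β : Fin d → ℂ) : Set (Fin k → ℂ) :=
  {α | ∃ I, IsMaxCone F I ∧ α ∈ BxCone F β I}

/-- Real version of `Bx(σ;γ)`. -/
def BxConeR (F : StackyFan d k) (γ : Fin d → ℝ) (I : Finset (Fin k)) : Set (Fin k → ℝ) :=
  {a | (∀ i, 0 ≤ a i ∧ a i < 1) ∧ (∀ i, i ∉ I → a i = 0) ∧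
    ∃ n : Fin d → ℤ, ∀ j, ∑ i, a i * (F.v i j : ℝ) = (n j : ℝ) + γ j}

def BxR (F : StackyFan d k) (γ : Fin d → ℝ) : Set (Fin k → ℝ) :=
  {a | ∃ I, IsMaxCone F I ∧ a ∈ BxConeR F γ I}

/-- `Box(σ;γ) ⊂ N ⊗ ℝ` for a real parameter `γ`. -/
def BoxCone (F : StackyFan d k) (γ : Fin d → ℝ) (I : Finset (Fin k)) : Set (Fin d → ℝ) :=
  {c | (∃ n : Fin d → ℤ, ∀ j, c j = (n j : ℝ) + γ j) ∧
    ∃ a ∈ BxConeR F γ I, ∀ j, c j = ∑ i, a i * (F.v i j : ℝ)}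

def Box (F : StackyFan d k) (γ : Fin d → ℝ) : Set (Fin d → ℝ) :=
  {c | ∃ I, IsMaxCone F I ∧ c ∈ BoxCone F γ I}

/-- `I` is the minimal cone of the fan containing the point `x`. -/
def IsMinConeAt (F : StackyFan d k) (x : Fin d → ℝ) (I : Finset (Fin k)) : Prop :=
  I ∈ F.cones ∧ x ∈ realCone F.v I ∧ ∀ J ∈ F.cones, x ∈ realCone F.v J → I ⊆ J

/-- `w ∈ ∑ αᵢ vᵢ + ∑_{i ∈ I} ℤ₊ vᵢ`. -/
def shiftMem (F : StackyFan d k) (I : Finset (Fin k)) (α : Fin k → ℂ) (w : Fin d → ℂ) : Prop :=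
  ∃ m : Fin k → ℕ, (∀ i, i ∉ I → m i = 0) ∧
    ∀ j, w j = ∑ i, (α i + (m i : ℂ)) * (F.v i j : ℂ)

/-- Indexing set for the basis `[n+β, α]` of the deformed module `ℤ[𝚺;β]` (Definition 2). -/
def DefBasis (F : StackyFan d k) (β : Fin d → ℂ) : Set ((Fin d → ℂ) × (Fin k → ℂ)) :=
  {p | (∃ n : Fin d → ℤ, ∀ j, p.1 j = (n j : ℂ) + β j) ∧
    ∃ I, IsMaxCone F I ∧ p.2 ∈ BxCone F β I ∧ shiftMem F I p.2 p.1}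

/-- The defining condition for `[n'] ⬝ [n+β,α] = [n'+n+β,α']` via the maximal cone `I`. -/
def ActRelVia (F : StackyFan d k) (β : Fin d → ℂ) (I : Finset (Fin k)) (n' : Fin d → ℤ)
    (p p' : (Fin d → ℂ) × (Fin k → ℂ)) : Prop :=
  IsMaxCone F I ∧ intPt n' ∈ realCone F.v I ∧
    p.2 ∈ BxCone F β I ∧ shiftMem F I p.2 p.1 ∧
    p'.2 ∈ BxCone F β I ∧ shiftMem F I p'.2 p'.1 ∧
    ∀ j, p'.1 j = (n' j : ℂ) + p.1 j

/-- `[n'] ⬝ [n+β,α] = [n'+n+β,α']` (the product is nonzero with value `p'`). -/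
def ActRel (F : StackyFan d k) (β : Fin d → ℂ) (n' : Fin d → ℤ)
    (p p' : (Fin d → ℂ) × (Fin k → ℂ)) : Prop :=
  ∃ I, ActRelVia F β I n' p p'

/-- `Re β + δ Im β`, as a real vector. -/
def reDeform (β : Fin d → ℂ) (δ : ℝ) : Fin d → ℝ := fun j => (β j).re + δ * (β j).im

/-- `Re β + δ Im β`, regarded inside `N ⊗ ℂ`. -/
def reDeformC (β : Fin d → ℂ) (δ : ℝ) : Fin d → ℂ := fun j => ((β j).re + δ * (β j).im : ℝ)

end GKZpaper

namespace GKZpaper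

variable {d k : ℕ}

/-- The cone `K ⊂ N ⊗ ℝ` over `Δ = conv(𝒜)`: the nonnegative span of the `vᵢ`. -/
def Kcone (v : Fin k → Fin d → ℤ) : Set (Fin d → ℝ) :=
  {x | ∃ c : Fin k → ℝ, (∀ i, 0 ≤ c i) ∧ ∀ j, x j = ∑ i, c i * (v i j : ℝ)}

/-- `I(𝚺)`: the indices `i` such that `vᵢ` generates a ray of the fan. -/
def raysIdx (F : StackyFan d k) : Set (Fin k) := {i | {i} ∈ F.cones}

/-- The lattice points of `K`. -/
def latticeK (v : Fin k → Fin d → ℤ) : Set (Fin d → ℤ) := {n | intPt n ∈ Kcone v}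

/-- The setting of §4: `𝒜 = {v₁,…,v_k}` generates `N` as a group, `deg(vᵢ) = 1` for a
homomorphism `deg : N → ℤ`, and `Σ` is a fan coming from a regular triangulation of
`Δ = conv 𝒜`, with support `K` and rays among the `vᵢ`. -/
structure GKZSetting (d k : ℕ) where
  F : StackyFan d k
  deg : (Fin d → ℤ) →ₗ[ℤ] ℤ
  hdeg : ∀ i, deg (F.v i) = 1
  hgen : Submodule.span ℤ (Set.range F.v) = ⊤
  hsupp : support F = Kcone F.v
  /-- regularity of the triangulation: a convex piecewise linear support function,
  linear exactly on the maximal cones. -/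
  hreg : ∃ η : (Fin d → ℝ) → ℝ, ConvexOn ℝ (Kcone F.v) η ∧
    ∀ I, IsMaxCone F I → ∃ L : (Fin d → ℝ) →ₗ[ℝ] ℝ,
      (∀ x ∈ realCone F.v I, η x = L x) ∧
      ∀ x ∈ Kcone F.v, x ∉ realCone F.v I → L x < η x

/-- The set `L(α,v)` of Definition 4.3: tuples `l` with `∑ lᵢ vᵢ = β - v` and
`lᵢ - αᵢ ∈ ℤ` for all `i`. -/
def Lset (v : Fin k → Fin d → ℤ) (β : Fin d → ℂ) (α : Fin k → ℂ) (w : Fin d → ℤ) :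
    Set (Fin k → ℂ) :=
  {l | (∀ j, ∑ i, l i * (v i j : ℂ) = β j - (w j : ℂ)) ∧ ∀ i, ∃ z : ℤ, l i - α i = (z : ℂ)}

/-- The generating points of the shadow module `ℂ[𝚺;χ]_ξ`: the points `w = n + χ` of `K`
with `w + εξ ∈ K` for all sufficiently small `ε > 0`. -/
def ShadowPts (F : StackyFan d k) (χ ξ : Fin d → ℝ) : Set (Fin d → ℝ) :=
  {w | (∃ n : Fin d → ℤ, ∀ j, w j = (n j : ℝ) + χ j) ∧ w ∈ Kcone F.v ∧
    ∃ ε₀ : ℝ, 0 < ε₀ ∧ ∀ ε : ℝ, 0 < ε → ε ≤ ε₀ →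
      (fun j => w j + ε * ξ j) ∈ Kcone F.v}

/-- `Re β`. -/
def rePt (β : Fin d → ℂ) : Fin d → ℝ := fun j => (β j).re

end GKZpaper

namespace GKZpaper

variable {d k : ℕ}

/-- Two lattice points lie in a common cone of the fan. -/
def commonCone (F : StackyFan d k) (x y : Fin d → ℝ) : Prop :=
  ∃ I ∈ F.cones, x ∈ realCone F.v I ∧ y ∈ realCone F.v I

/-- The polynomial ring on the generators `[n]`, `n ∈ K ∩ N`, presenting `R = ℂ[𝚺]`. -/
abbrev FreeA (v : Fin k → Fin d → ℤ) := MvPolynomial ↥(latticeK v) ℂ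

/-- The defining relations of the deformed semigroup ring `ℂ[𝚺]`:
`[a]⬝[b] = [a+b]` when `a, b` lie in a common cone of `Σ`, `[a]⬝[b] = 0` otherwise,
and `[0] = 1`. -/
def relR (F : StackyFan d k) : Set (FreeA F.v) :=
  {p | ∃ a b c : ↥(latticeK F.v),
      commonCone F (intPt ↑a) (intPt ↑b) ∧ ((c : Fin d → ℤ) = ↑a + ↑b) ∧
      p = MvPolynomial.X a * MvPolynomial.X b - MvPolynomial.X c} ∪
  {p | ∃ a b : ↥(latticeK F.v), ¬ commonCone F (intPt ↑a) (intPt ↑b) ∧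
      p = MvPolynomial.X a * MvPolynomial.X b} ∪
  {p | ∃ z : ↥(latticeK F.v), ((z : Fin d → ℤ) = 0) ∧ p = MvPolynomial.X z - 1}

/-- The deformed semigroup ring `R = ℂ[𝚺]`, by generators and relations. -/
abbrev Rring (F : StackyFan d k) := FreeA F.v ⧸ Ideal.span (relR F)

/-- The element `[n]` of `R = ℂ[𝚺]`. -/
noncomputable def Rgen (F : StackyFan d k) (n : ↥(latticeK F.v)) : Rring F :=
  Ideal.Quotient.mk _ (MvPolynomial.X n)

lemma v_mem_latticeK (v : Fin k → Fin d → ℤ) (i : Fin k) : v i ∈ latticeK v := by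
  refine ⟨fun i' => if i' = i then 1 else 0, fun i' => by positivity, fun j => ?_⟩
  simp [intPt, ite_mul, Finset.sum_ite_eq']

/-- The element `Z_g = ∑_{i ∈ I(𝚺)} g(vᵢ)[vᵢ] ∈ R`. -/
noncomputable def Zelt (F : StackyFan d k) (g : (Fin d → ℤ) →ₗ[ℤ] ℤ) : Rring F :=
  letI := Classical.propDecidable
  ∑ i, if i ∈ raysIdx F then
    (algebraMap ℂ (Rring F) ((g (F.v i) : ℤ) : ℂ)) * Rgen F ⟨F.v i, v_mem_latticeK F.v i⟩
  else 0

/-- The lattice points indexing the basis `[n+χ]` of `ℂ[𝚺;χ]`. -/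
def Ppts (v : Fin k → Fin d → ℤ) (χ : Fin d → ℝ) : Set (Fin d → ℤ) :=
  {n | (fun j => (n j : ℝ) + χ j) ∈ Kcone v}

/-- The free `R`-module on the symbols `[n+χ]`. -/
abbrev MfreeR (F : StackyFan d k) (χ : Fin d → ℝ) := ↥(Ppts F.v χ) →₀ Rring F

/-- The defining relations of the `R`-module `ℂ[𝚺;χ]`: `[a]⬝[w] = [a+w]` if `a` and `w`
lie in a common cone, and `[a]⬝[w] = 0` otherwise. -/
def relM (F : StackyFan d k) (χ : Fin d → ℝ) : Set (MfreeR F χ) :=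
  {x | ∃ (a : ↥(latticeK F.v)) (w w' : ↥(Ppts F.v χ)),
      commonCone F (intPt ↑a) (fun j => ((w : Fin d → ℤ) j : ℝ) + χ j) ∧
      ((w' : Fin d → ℤ) = ↑a + ↑w) ∧
      x = Finsupp.single w (Rgen F a) - Finsupp.single w' 1} ∪
  {x | ∃ (a : ↥(latticeK F.v)) (w : ↥(Ppts F.v χ)),
      ¬ commonCone F (intPt ↑a) (fun j => ((w : Fin d → ℤ) j : ℝ) + χ j) ∧
      x = Finsupp.single w (Rgen F a)}

/-- The `R`-module `ℂ[𝚺;χ]`, by generators and relations. -/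
abbrev Mmod (F : StackyFan d k) (χ : Fin d → ℝ) :=
  MfreeR F χ ⧸ Submodule.span (Rring F) (relM F χ)

/-- The class of the basis element `[n+χ]` in `ℂ[𝚺;χ]`. -/
noncomputable def Mgen (F : StackyFan d k) (χ : Fin d → ℝ) (w : ↥(Ppts F.v χ)) :
    Mmod F χ :=
  Submodule.Quotient.mk (Finsupp.single w 1)

/-- The shadow module `ℂ[𝚺;χ]_ξ ⊆ ℂ[𝚺;χ]` (Definition 4.1): the `R`-submodule generated
by the `[n+χ]` with `n + χ + εξ ∈ K` for all sufficiently small `ε > 0`. -/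
noncomputable def ShadowSub (F : StackyFan d k) (χ ξ : Fin d → ℝ) :
    Submodule (Rring F) (Mmod F χ) :=
  Submodule.span (Rring F)
    {x | ∃ w : ↥(Ppts F.v χ),
      ((fun j => ((w : Fin d → ℤ) j : ℝ) + χ j) ∈ ShadowPts F χ ξ) ∧ x = Mgen F χ w}

end GKZpaper

set_option synthInstance.maxHeartbeats 1000000
set_option maxHeartbeats 2000000
open scoped ENNReal
namespace GKZpaper

variable {d k : ℕ}

/-- The ideal `Z = (Z₁,…,Z_d) ⊂ R`. -/
noncomputable def Zideal (F : StackyFan d k) (g : Fin d → ((Fin d → ℤ) →ₗ[ℤ] ℤ)) :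
    Ideal (Rring F) :=
  Ideal.span {r | ∃ j, r = Zelt F (g j)}

/-- The truncated cone `conv({0} ∪ Δ) = {x ∈ K : deg x ≤ 1}`; the normalized volume of
`Δ` equals `d!` times its Lebesgue volume. -/
def degBody (S : GKZSetting d k) : Set (Fin d → ℝ) :=
  {x | x ∈ Kcone S.F.v ∧ ∑ j, x j * (S.deg (Pi.single j 1) : ℝ) ≤ 1}


end GKZpaper

/-!
Let `q` be `ξ`, pushed slightly towards a generic point of `K`. Assign a point to the
full-dimensional cone `σ` into whose interior `q` moves it: this decomposes the set of points of `K`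
that stay in `K` in the direction `ξ` into disjoint half-open simplicial cones, one in each `σ`. The
lattice points of such a half-open cone are obtained, each exactly once, by adding combinations of
the generators of `σ` with coefficients in `ℕ` to the `|det σ|` points in a box. Hence the shadow
module has a basis indexed by pairs of a box point and a monomial in `d` variables.

On this basis `Z_j` acts by the linear form `∑ₐ g_j(v_{σ(a)}) xₐ`, up to terms coming from the rays
outside `σ`; these belong to other cones. Rank the cones `σ` by the value at `q` of the linear
function to which the convex support function of the triangulation restricts on `σ`: such terms have
smaller rank. For each `σ` the linear forms are a linear change of the variables, so by
triangularity the `Z_j` act, after a change of basis, as the variables of a polynomial ring on a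
free module. The quotient thus has one basis element per box point, and `∑ |det σ|` is the
normalized volume of `Δ` because the simplices `conv({0} ∪ {v_{σ(a)}})` tile the truncated cone.

The module `ℂ[𝚺;χ]` is its own shadow in the direction `0`, and `ℂ[𝚺]` is `ℂ[𝚺;0]`.
-/

namespace GKZpaper

section UnitriangularEndomorphisms

variable {𝕜 B A : Type*} [CommRing 𝕜] [AddCommGroup A] [Module 𝕜 A]

/-- The functions `B → A` supported on the elements of rank less than `r`. -/
def belowRank (𝕜 : Type*) {B : Type*} (A : Type*) [CommRing 𝕜] [AddCommGroup A] [Module 𝕜 A]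
    (rk : B → ℕ) (r : ℕ) : Submodule 𝕜 (B → A) :=
  Submodule.pi {c | r ≤ rk c} fun _ => ⊥

theorem mem_belowRank {rk : B → ℕ} {r : ℕ} {f : B → A} :
    f ∈ belowRank 𝕜 A rk r ↔ ∀ c, r ≤ rk c → f c = 0 := by
  simp [belowRank, Submodule.mem_pi]

theorem belowRank_mono (rk : B → ℕ) : Monotone (belowRank 𝕜 A rk) :=
  fun _ _ hrs _ hf => mem_belowRank.2 fun c hc => mem_belowRank.1 hf c (hrs.trans hc)

variable [Finite B] [DecidableEq B]

theorem map_mem_of_mem_belowRank {N : Type*} [AddCommGroup N] [Module 𝕜 N] {rk : B → ℕ} {r : ℕ}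
    (T : (B → A) →ₗ[𝕜] N) {P : Submodule 𝕜 N} (h : ∀ b a, rk b < r → T (Pi.single b a) ∈ P)
    {f : B → A} (hf : f ∈ belowRank 𝕜 A rk r) : T f ∈ P := by
  have := Fintype.ofFinite B
  rw [← Finset.univ_sum_single f, map_sum]
  refine P.sum_mem fun b _ => ?_
  rcases lt_or_ge (rk b) r with hb | hb
  · exact h b (f b) hb
  · rw [mem_belowRank.1 hf b hb, Pi.single_zero, map_zero]
    exact P.zero_mem

theorem bijective_of_unitriangular (rk : B → ℕ) (T : Module.End 𝕜 (B → A))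
    (hT : ∀ b a, T (Pi.single b a) - Pi.single b a ∈ belowRank 𝕜 A rk (rk b)) :
    Function.Bijective T := by
  have lower (r : ℕ) {f : B → A} (hf : f ∈ belowRank 𝕜 A rk (r + 1)) :
      (T - 1) f ∈ belowRank 𝕜 A rk r :=
    map_mem_of_mem_belowRank (T - 1)
      (fun b a hb => belowRank_mono rk (Nat.lt_succ_iff.1 hb) (hT b a)) hf
  have lower_pow (r : ℕ) : ∀ f ∈ belowRank 𝕜 A rk r, ((T - 1) ^ r) f = 0 := by
    induction r with
    | zero => exact fun f hf => funext fun c => mem_belowRank.1 hf c (Nat.zero_le _)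
    | succ r ih => exact fun f hf => by rw [pow_succ, Module.End.mul_apply, ih _ (lower r hf)]
  have nilpotent : IsNilpotent (T - 1) := by
    have := Fintype.ofFinite B
    refine ⟨Finset.univ.sup rk + 1, LinearMap.ext fun f => lower_pow _ f ?_⟩
    refine mem_belowRank.2 fun c hc => absurd hc (not_le.2 ?_)
    exact Nat.lt_succ_of_le (Finset.le_sup (Finset.mem_univ c))
  rw [← Module.End.isUnit_iff]
  simpa using nilpotent.isUnit_one_add

end UnitriangularEndomorphisms

section KoszulQuotient

open MvPolynomial

variable {𝕜 R N σ B : Type*} [CommRing 𝕜] [CommRing R] [Algebra 𝕜 R] [AddCommGroup N] [Module R N]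
  [Module 𝕜 N] [IsScalarTower 𝕜 R N]

theorem aeval_sub_algebraMap_aeval_zero_mem_span (z : σ → R) (p : MvPolynomial σ 𝕜) :
    aeval z p - algebraMap 𝕜 R (aeval 0 p) ∈ Ideal.span (Set.range z) := by
  induction p using MvPolynomial.induction_on with
  | C c => simp
  | add p q hp hq =>
    rw [map_add, map_add, map_add, add_sub_add_comm]
    exact Ideal.add_mem _ hp hq
  | mul_X p j _ =>
    simpa using Ideal.mul_mem_left _ (aeval z p) (Ideal.subset_span (Set.mem_range_self j))

theorem restrictScalars_span_smul_top_le {s : Set R} {P : Submodule 𝕜 N}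
    (h : ∀ r ∈ s, ∀ n : N, r • n ∈ P) :
    (Ideal.span s • (⊤ : Submodule R N)).restrictScalars 𝕜 ≤ P := by
  have smul_mem (r : R) (hr : r ∈ Ideal.span s) (n : N) : r • n ∈ P := by
    induction hr using Submodule.span_induction generalizing n with
    | mem r hr => exact h r hr n
    | zero => rw [zero_smul]; exact P.zero_mem
    | add r r' _ _ ih ih' => rw [add_smul]; exact P.add_mem (ih n) (ih' n)
    | smul a r _ ih => rw [smul_eq_mul, mul_comm, mul_smul]; exact ih (a • n)
  intro n hn
  rw [Submodule.restrictScalars_mem] at hn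
  induction hn using Submodule.smul_induction_on' with
  | smul r hr n _ => exact smul_mem r hr n
  | add x _ y _ hx hy => exact P.add_mem hx hy

theorem aeval_smul_sub_mem_of_triangular [Finite B] [DecidableEq B] (rk : B → ℕ) (z : σ → R)
    (E : (B → MvPolynomial σ 𝕜) ≃ₗ[𝕜] N)
    (hE : ∀ j b f, z j • E (Pi.single b f) - E (Pi.single b (X j * f)) ∈
      (belowRank 𝕜 _ rk (rk b)).map E.toLinearMap) (p f : MvPolynomial σ 𝕜) (b : B) :
    aeval z p • E (Pi.single b f) - E (Pi.single b (p * f)) ∈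
      (belowRank 𝕜 _ rk (rk b)).map E.toLinearMap := by
  have stable (j : σ) (r : ℕ) {n : N} (hn : n ∈ (belowRank 𝕜 _ rk r).map E.toLinearMap) :
      z j • n ∈ (belowRank 𝕜 _ rk r).map E.toLinearMap := by
    obtain ⟨h, hh, rfl⟩ := hn
    refine map_mem_of_mem_belowRank
      (((LinearMap.lsmul R N (z j)).restrictScalars 𝕜) ∘ₗ E.toLinearMap) (fun c a hc => ?_) hh
    have lower := Submodule.map_mono (belowRank_mono rk hc.le) (hE j c a)
    have leading : E (Pi.single c (X j * a)) ∈ (belowRank 𝕜 _ rk r).map E.toLinearMap :=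
      Submodule.mem_map_of_mem (mem_belowRank.2 fun c' hc' =>
        Pi.single_eq_of_ne (by rintro rfl; exact hc.not_ge hc') _)
    simpa using Submodule.add_mem _ lower leading
  induction p using MvPolynomial.induction_on with
  | C c => simp [← smul_eq_C_mul, Pi.single_smul]
  | add p q hp hq =>
    rw [map_add, add_smul, add_mul, Pi.single_add, map_add, add_sub_add_comm]
    exact Submodule.add_mem _ hp hq
  | mul_X p j hp =>
    have step := Submodule.add_mem _ (stable j (rk b) hp) (hE j b (p * f))
    rw [smul_sub, sub_add_sub_cancel] at step
    rwa [map_mul, aeval_X, mul_comm (aeval z p), mul_smul, mul_comm p, mul_assoc]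

/-- `f ↦ ∑ b, f b (z) • u b`: the `R`-linear combinations of the `u b` whose coefficients are
polynomials in the `z j`. -/
noncomputable def polynomialCombination [Fintype B] (z : σ → R) (u : B → N) :
    (B → MvPolynomial σ 𝕜) →ₗ[𝕜] N :=
  ∑ b, ((LinearMap.toSpanSingleton R N (u b)).restrictScalars 𝕜 ∘ₗ (aeval z).toLinearMap) ∘ₗ
    LinearMap.proj b

variable [Fintype B]

theorem polynomialCombination_apply (z : σ → R) (u : B → N) (f : B → MvPolynomial σ 𝕜) :
    polynomialCombination z u f = ∑ b, aeval z (f b) • u b := by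
  simp [polynomialCombination]

theorem polynomialCombination_single [DecidableEq B] (z : σ → R) (u : B → N) (b : B)
    (p : MvPolynomial σ 𝕜) :
    polynomialCombination z u (Pi.single b p) = aeval z p • u b := by
  rw [polynomialCombination_apply, Finset.sum_eq_single b]
  · rw [Pi.single_eq_same]
  · intro c _ hc
    rw [Pi.single_eq_of_ne hc, map_zero, zero_smul]
  · exact fun hb => absurd (Finset.mem_univ b) hb

theorem polynomialCombination_X_mul (z : σ → R) (u : B → N) (j : σ) (f : B → MvPolynomial σ 𝕜) :
    polynomialCombination z u (fun b => X j * f b) = z j • polynomialCombination z u f := by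
  simp only [polynomialCombination_apply, map_mul, aeval_X, mul_smul, Finset.smul_sum]

theorem finrank_quotient_of_bijective_polynomialCombination [Nontrivial 𝕜] (z : σ → R) (u : B → N)
    (hu : Function.Bijective (polynomialCombination (𝕜 := 𝕜) z u)) :
    Module.finrank 𝕜 (N ⧸ (Ideal.span (Set.range z) • (⊤ : Submodule R N))) =
      Fintype.card B := by
  let Θ := LinearEquiv.ofBijective (polynomialCombination (𝕜 := 𝕜) z u) hu
  let ε : (B → MvPolynomial σ 𝕜) →ₗ[𝕜] (B → 𝕜) :=
    LinearMap.pi fun b => (aeval (0 : σ → 𝕜)).toLinearMap ∘ₗ LinearMap.proj b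
  let κ : N →ₗ[𝕜] (B → 𝕜) := ε ∘ₗ Θ.symm
  have κ_apply (f : B → MvPolynomial σ 𝕜) (b : B) :
      κ (polynomialCombination z u f) b = aeval 0 (f b) :=
    congrArg (fun f => ε f b) (Θ.symm_apply_apply f)
  have κ_surjective : Function.Surjective κ := fun c =>
    ⟨polynomialCombination z u fun b => C (c b), funext fun b => by simp [κ_apply]⟩
  have ker_κ : LinearMap.ker κ =
      (Ideal.span (Set.range z) • (⊤ : Submodule R N)).restrictScalars 𝕜 := by
    refine le_antisymm (fun n hn => ?_) (restrictScalars_span_smul_top_le ?_)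
    · obtain ⟨f, rfl⟩ := hu.surjective n
      rw [Submodule.restrictScalars_mem, polynomialCombination_apply]
      refine Submodule.sum_mem _ fun b _ => Submodule.smul_mem_smul ?_ Submodule.mem_top
      have hb : aeval (0 : σ → 𝕜) (f b) = 0 := by rw [← κ_apply, LinearMap.mem_ker.1 hn]; rfl
      simpa [hb] using aeval_sub_algebraMap_aeval_zero_mem_span z (f b)
    · rintro _ ⟨j, rfl⟩ n
      obtain ⟨f, rfl⟩ := hu.surjective n
      rw [LinearMap.mem_ker, ← polynomialCombination_X_mul]
      ext b
      simp [κ_apply]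
  rw [← (Submodule.Quotient.restrictScalarsEquiv 𝕜 _).finrank_eq, ← ker_κ,
    (κ.quotKerEquivOfSurjective κ_surjective).finrank_eq, Module.finrank_fintype_fun_eq_card]

theorem bijective_polynomialCombination_of_triangular [DecidableEq B] (rk : B → ℕ) (z : σ → R)
    (E : (B → MvPolynomial σ 𝕜) ≃ₗ[𝕜] N)
    (hE : ∀ j b f, z j • E (Pi.single b f) - E (Pi.single b (X j * f)) ∈
      (belowRank 𝕜 _ rk (rk b)).map E.toLinearMap) :
    Function.Bijective (polynomialCombination (𝕜 := 𝕜) z fun b => E (Pi.single b 1)) := by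
  set Θ := polynomialCombination (𝕜 := 𝕜) z fun b => E (Pi.single b 1) with hΘ
  have unitriangular (b : B) (p : MvPolynomial σ 𝕜) :
      (E.symm.toLinearMap ∘ₗ Θ) (Pi.single b p) - Pi.single b p ∈ belowRank 𝕜 _ rk (rk b) := by
    obtain ⟨h, hh, h_eq⟩ := aeval_smul_sub_mem_of_triangular rk z E hE p 1 b
    rw [mul_one] at h_eq
    have : h = E.symm (Θ (Pi.single b p)) - Pi.single b p := by
      rw [hΘ, polynomialCombination_single, ← E.symm_apply_apply h]
      simpa using congrArg E.symm h_eq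
    exact this ▸ hh
  have := E.bijective.comp (bijective_of_unitriangular rk _ unitriangular)
  simpa [Function.comp_def] using this

theorem exists_algEquiv_X_eq_toMvPolynomial [Fintype σ] [DecidableEq σ] {M : Matrix σ σ 𝕜}
    (hM : IsUnit M.det) :
    ∃ φ : MvPolynomial σ 𝕜 ≃ₐ[𝕜] MvPolynomial σ 𝕜, ∀ j, φ (X j) = M.toMvPolynomial j := by
  have cancel {P Q : Matrix σ σ 𝕜} (h : P * Q = 1) :
      (aeval Q.toMvPolynomial).comp (aeval P.toMvPolynomial) = AlgHom.id 𝕜 (MvPolynomial σ 𝕜) := by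
    refine algHom_ext fun j => ?_
    rw [AlgHom.comp_apply, aeval_X, aeval_eq_bind₁, ← Matrix.toMvPolynomial_mul, h,
      Matrix.toMvPolynomial_one, AlgHom.id_apply]
  exact ⟨AlgEquiv.ofAlgHom _ _ (cancel (Matrix.nonsing_inv_mul M hM))
    (cancel (Matrix.mul_nonsing_inv M hM)), fun j => aeval_X _ j⟩

theorem toMvPolynomial_mul_monomial [Fintype σ] (M : Matrix σ σ 𝕜) (j : σ) (m : σ →₀ ℕ) :
    M.toMvPolynomial j * monomial m 1 = ∑ a, M j a • monomial (m + Finsupp.single a 1) 1 := by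
  simp [Matrix.toMvPolynomial, Finset.sum_mul, monomial_mul, smul_monomial, add_comm m]

/-- A module with a basis indexed by pairs `(b, m)`, seen as a direct sum of copies of the
polynomial ring, the basis vector `(b, m)` being the monomial `m` in the copy `b`. -/
noncomputable def polynomialEquiv (e : Module.Basis (Σ _ : B, (σ →₀ ℕ)) 𝕜 N) :
    (B → MvPolynomial σ 𝕜) ≃ₗ[𝕜] N :=
  (Pi.basis fun _ : B => basisMonomials σ 𝕜).equiv e (Equiv.refl _)

theorem polynomialEquiv_single_monomial [DecidableEq B] (e : Module.Basis (Σ _ : B, (σ →₀ ℕ)) 𝕜 N)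
    (b : B) (m : σ →₀ ℕ) :
    polynomialEquiv e (Pi.single b (monomial m 1)) = e ⟨b, m⟩ := by
  have : (Pi.single b (monomial m 1) : B → MvPolynomial σ 𝕜) =
      Pi.basis (fun _ : B => basisMonomials σ 𝕜) ⟨b, m⟩ := by
    rw [Pi.basis_apply, coe_basisMonomials]
  rw [this, polynomialEquiv, Module.Basis.equiv_apply, Equiv.refl_apply]

theorem smul_polynomialEquiv_single_sub_mem [Fintype σ] [DecidableEq B]
    (e : Module.Basis (Σ _ : B, (σ →₀ ℕ)) 𝕜 N) {b : B} {r : R} {M : Matrix σ σ 𝕜} {j : σ}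
    {P : Submodule 𝕜 N}
    (h : ∀ m, r • e ⟨b, m⟩ - ∑ a, M j a • e ⟨b, m + Finsupp.single a 1⟩ ∈ P)
    (f : MvPolynomial σ 𝕜) :
    r • polynomialEquiv e (Pi.single b f) -
      polynomialEquiv e (Pi.single b (M.toMvPolynomial j * f)) ∈ P := by
  induction f using MvPolynomial.induction_on' with
  | monomial m c =>
    have single_sum : (Pi.single b (∑ a, M j a • monomial (m + Finsupp.single a 1) 1) :
        B → MvPolynomial σ 𝕜) = ∑ a, M j a • Pi.single b (monomial (m + Finsupp.single a 1) 1) := by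
      simp only [← LinearMap.single_apply 𝕜, map_sum, map_smul]
    rw [← mul_one c, ← smul_eq_mul, ← smul_monomial, mul_smul_comm, toMvPolynomial_mul_monomial,
      Pi.single_smul, Pi.single_smul, single_sum, map_smul, map_smul, map_sum, smul_comm r c,
      ← smul_sub]
    simpa only [map_smul, polynomialEquiv_single_monomial] using P.smul_mem c (h m)
  | add f g hf hg =>
    rw [mul_add, Pi.single_add, Pi.single_add, map_add, map_add, smul_add, add_sub_add_comm]
    exact P.add_mem hf hg

theorem finrank_quotient_span_smul_top_of_triangular [Nontrivial 𝕜] [Fintype σ] [DecidableEq σ]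
    (e : Module.Basis (Σ _ : B, (σ →₀ ℕ)) 𝕜 N) (rk : B → ℕ) (z : σ → R)
    (M : B → Matrix σ σ 𝕜) (hM : ∀ b, IsUnit (M b).det)
    (h : ∀ j b m, z j • e ⟨b, m⟩ - ∑ a, M b j a • e ⟨b, m + Finsupp.single a 1⟩ ∈
      Submodule.span 𝕜 {n | ∃ c m', rk c < rk b ∧ n = e ⟨c, m'⟩}) :
    Module.finrank 𝕜 (N ⧸ (Ideal.span (Set.range z) • (⊤ : Submodule R N))) =
      Fintype.card B := by
  classical
  choose φ hφ using fun b => exists_algEquiv_X_eq_toMvPolynomial (hM b)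
  let E := LinearEquiv.piCongrRight (fun b => (φ b).toLinearEquiv) ≪≫ₗ polynomialEquiv e
  have E_single (b : B) (f : MvPolynomial σ 𝕜) :
      E (Pi.single b f) = polynomialEquiv e (Pi.single b (φ b f)) :=
    congrArg (polynomialEquiv e) (funext fun c =>
      Pi.apply_single (fun c => φ c) (fun c => map_zero (φ c)) b f c)
  have span_le (b : B) : Submodule.span 𝕜 {n | ∃ c m', rk c < rk b ∧ n = e ⟨c, m'⟩} ≤
      (belowRank 𝕜 (MvPolynomial σ 𝕜) rk (rk b)).map E.toLinearMap := by
    rw [Submodule.span_le]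
    rintro _ ⟨c, m, hc, rfl⟩
    refine ⟨Pi.single c ((φ c).symm (monomial m 1)), mem_belowRank.2 fun c' hc' =>
      Pi.single_eq_of_ne (by rintro rfl; exact hc.not_ge hc') _, ?_⟩
    rw [LinearEquiv.coe_coe, E_single, AlgEquiv.apply_symm_apply, polynomialEquiv_single_monomial]
  refine finrank_quotient_of_bijective_polynomialCombination z _
    (bijective_polynomialCombination_of_triangular rk z E fun j b f => ?_)
  rw [E_single, E_single, map_mul, hφ]
  exact smul_polynomialEquiv_single_sub_mem e (fun m => span_le b (h j b m)) (φ b f)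

end KoszulQuotient

section RealCone

variable {d k : ℕ} {v : Fin k → Fin d → ℤ} {I J : Finset (Fin k)} {x y : Fin d → ℝ}

theorem intPt_add (m n : Fin d → ℤ) : intPt (m + n) = intPt m + intPt n := by
  ext j; simp [intPt]

theorem intPt_zero : intPt (0 : Fin d → ℤ) = 0 := by
  ext j; simp [intPt]

theorem intPt_injective : Function.Injective (intPt : (Fin d → ℤ) → Fin d → ℝ) :=
  fun _ _ h => funext fun j => Int.cast_injective (congrFun h j)

theorem mem_realCone_iff : x ∈ realCone v I ↔ ∃ c : Fin k → ℝ, (∀ i, 0 ≤ c i) ∧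
    (∀ i ∉ I, c i = 0) ∧ x = ∑ i, c i • intPt (v i) := by
  simp only [realCone, Set.mem_ofPred_eq, funext_iff, Finset.sum_apply, Pi.smul_apply,
    smul_eq_mul, intPt]

theorem Kcone_eq_realCone_univ (v : Fin k → Fin d → ℤ) : Kcone v = realCone v Finset.univ := by
  simp [Kcone, realCone]

theorem realCone_mono (h : I ⊆ J) : realCone v I ⊆ realCone v J :=
  fun _ ⟨c, hc, hcI, hx⟩ => ⟨c, hc, fun i hi => hcI i fun hi' => hi (h hi'), hx⟩

theorem realCone_subset_Kcone (v : Fin k → Fin d → ℤ) (I : Finset (Fin k)) :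
    realCone v I ⊆ Kcone v :=
  Kcone_eq_realCone_univ v ▸ realCone_mono (Finset.subset_univ I)

theorem zero_mem_realCone (v : Fin k → Fin d → ℤ) (I : Finset (Fin k)) :
    (0 : Fin d → ℝ) ∈ realCone v I :=
  mem_realCone_iff.2 ⟨0, by simp⟩

theorem add_mem_realCone (hx : x ∈ realCone v I) (hy : y ∈ realCone v I) :
    x + y ∈ realCone v I := by
  rw [mem_realCone_iff] at *
  obtain ⟨c, hc, hcI, rfl⟩ := hx
  obtain ⟨e, he, heI, rfl⟩ := hy
  exact ⟨c + e, fun i => add_nonneg (hc i) (he i), fun i hi => by simp [hcI i hi, heI i hi],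
    by simp only [Pi.add_apply, add_smul, Finset.sum_add_distrib]⟩

theorem smul_mem_realCone {t : ℝ} (ht : 0 ≤ t) (hx : x ∈ realCone v I) : t • x ∈ realCone v I := by
  rw [mem_realCone_iff] at *
  obtain ⟨c, hc, hcI, rfl⟩ := hx
  exact ⟨t • c, fun i => mul_nonneg ht (hc i), fun i hi => by simp [hcI i hi],
    by simp only [Pi.smul_apply, smul_assoc, Finset.smul_sum]⟩

theorem intPt_mem_realCone {i : Fin k} (hi : i ∈ I) : intPt (v i) ∈ realCone v I := by
  refine mem_realCone_iff.2 ⟨Pi.single i 1, fun l => ?_, fun l hl => ?_, ?_⟩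
  · exact (Pi.single_nonneg (α := fun _ => ℝ)).2 zero_le_one l
  · exact Pi.single_eq_of_ne (ne_of_mem_of_not_mem hi hl).symm 1
  · simp [Pi.single_apply]

theorem realCone_empty (v : Fin k → Fin d → ℤ) : realCone v ∅ = {0} := by
  refine Set.eq_singleton_iff_unique_mem.2 ⟨zero_mem_realCone v ∅, fun x hx => ?_⟩
  obtain ⟨c, -, hc, rfl⟩ := mem_realCone_iff.1 hx
  exact Finset.sum_eq_zero fun i _ => by rw [hc i (Finset.notMem_empty i), zero_smul]

/-- The linear span of the cone on the vectors `v i`, `i ∈ I`. -/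
def coneSpan (v : Fin k → Fin d → ℤ) (I : Finset (Fin k)) : Submodule ℝ (Fin d → ℝ) :=
  Submodule.span ℝ ((fun i => intPt (v i)) '' I)

theorem realCone_subset_coneSpan (v : Fin k → Fin d → ℤ) (I : Finset (Fin k)) :
    realCone v I ⊆ coneSpan v I := by
  intro x hx
  obtain ⟨c, -, hcI, rfl⟩ := mem_realCone_iff.1 hx
  refine Submodule.sum_mem _ fun i _ => ?_
  by_cases hi : i ∈ I
  · exact Submodule.smul_mem _ _ (Submodule.subset_span ⟨i, hi, rfl⟩)
  · rw [hcI i hi, zero_smul]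
    exact Submodule.zero_mem _

theorem coneSpan_ne_top (v : Fin k → Fin d → ℤ) (hI : I.card < d) : coneSpan v I ≠ ⊤ := by
  classical
  intro h
  have hle := (finrank_span_finset_le_card (R := ℝ) (I.image fun i => intPt (v i))).trans
    Finset.card_image_le
  rw [Set.finrank, Finset.coe_image, ← coneSpan, h, finrank_top, Module.finrank_fin_fun] at hle
  omega

theorem coneSpan_univ_eq_top (hv : Submodule.span ℤ (Set.range v) = ⊤) :
    coneSpan v Finset.univ = ⊤ := by
  have hint (n : Fin d → ℤ) : intPt n ∈ coneSpan v Finset.univ := by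
    have hn : n ∈ Submodule.span ℤ (Set.range v) := hv ▸ Submodule.mem_top
    induction hn using Submodule.span_induction with
    | mem n hn =>
      obtain ⟨i, rfl⟩ := hn
      exact Submodule.subset_span ⟨i, by simp, rfl⟩
    | zero => rw [intPt_zero]; exact Submodule.zero_mem _
    | add m n _ _ hm hn => rw [intPt_add]; exact Submodule.add_mem _ hm hn
    | smul t n _ hn =>
      have : intPt (t • n) = (t : ℝ) • intPt n := by ext j; simp [intPt]
      rw [this]
      exact Submodule.smul_mem _ _ hn
  rw [eq_top_iff, ← (Pi.basisFun ℝ (Fin d)).span_eq, Submodule.span_le]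
  rintro _ ⟨j, rfl⟩
  have hj : Pi.basisFun ℝ (Fin d) j = intPt (Pi.single j 1) := by
    ext l
    simp [intPt, Pi.single_apply]
  exact hj ▸ hint (Pi.single j 1)

end RealCone

section SimplicialFan

variable {d k : ℕ} {F : StackyFan d k} {I J : Finset (Fin k)} {x y : Fin d → ℝ}

theorem StackyFan.coeff_eq_of_sum_smul_eq (hI : I ∈ F.cones) {c e : Fin k → ℝ}
    (hc : ∀ i ∉ I, c i = 0) (he : ∀ i ∉ I, e i = 0)
    (h : ∑ i, c i • intPt (F.v i) = ∑ i, e i • intPt (F.v i)) : c = e := by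
  have hli : LinearIndepOn ℝ (fun i => intPt (F.v i)) (I : Set (Fin k)) := F.simplicial I hI
  have hsum : ∑ i ∈ I, (c i - e i) • intPt (F.v i) = 0 := by
    rw [Finset.sum_subset (Finset.subset_univ I)
      fun i _ hi => by rw [hc i hi, he i hi, sub_zero, zero_smul]]
    simp only [sub_smul, Finset.sum_sub_distrib, h, sub_self]
  ext i
  by_cases hi : i ∈ I
  · exact sub_eq_zero.1 (linearIndepOn_finset_iff.1 hli _ hsum i hi)
  · rw [hc i hi, he i hi]

theorem StackyFan.mem_realCone_of_add_mem (hI : I ∈ F.cones) (hJ : J ∈ F.cones)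
    (hx : x ∈ realCone F.v J) (hy : y ∈ realCone F.v J) (hxy : x + y ∈ realCone F.v I) :
    x ∈ realCone F.v I := by
  have hIJ : x + y ∈ realCone F.v (I ∩ J) := by
    rw [← F.inter I hI J hJ]
    exact ⟨hxy, add_mem_realCone hx hy⟩
  rw [mem_realCone_iff] at *
  obtain ⟨c, hc, hcJ, rfl⟩ := hx
  obtain ⟨e, he, heJ, rfl⟩ := hy
  obtain ⟨f, -, hf, hsum⟩ := hIJ
  have hcef : c + e = f := F.coeff_eq_of_sum_smul_eq hJ
    (fun i hi => by simp [hcJ i hi, heJ i hi]) (fun i hi => hf i (by simp [hi]))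
    (by simp only [← hsum, Pi.add_apply, add_smul, Finset.sum_add_distrib])
  refine ⟨c, hc, fun i hi => ?_, rfl⟩
  have hi0 : c i + e i = 0 := (congrFun hcef i).trans (hf i (by simp [hi]))
  exact ((add_eq_zero_iff_of_nonneg (hc i) (he i)).1 hi0).1

theorem StackyFan.mem_of_intPt_mem_realCone (hI : I ∈ F.cones) {i : Fin k} (hi : {i} ∈ F.cones)
    (hv : F.v i ≠ 0) (h : intPt (F.v i) ∈ realCone F.v I) : i ∈ I := by
  have hmem : intPt (F.v i) ∈ realCone F.v ({i} ∩ I) := by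
    rw [← F.inter _ hi _ hI]
    exact ⟨intPt_mem_realCone (Finset.mem_singleton_self i), h⟩
  by_contra hn
  rw [Finset.singleton_inter_of_notMem hn, realCone_empty] at hmem
  exact hv (intPt_injective (hmem.trans intPt_zero.symm))

theorem StackyFan.card_le (hI : I ∈ F.cones) : I.card ≤ d := by
  simpa using (F.simplicial I hI).fintype_card_le_finrank

/-- The full-dimensional cones of a fan, recorded by their index sets. -/
abbrev FullCone (F : StackyFan d k) := {I : Finset (Fin k) // I ∈ F.cones ∧ I.card = d}

namespace FullCone

variable {σ τ : FullCone F}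

theorem isMaxCone (σ : FullCone F) : IsMaxCone F σ.1 :=
  ⟨σ.2.1, fun _ hJ h =>
    (Finset.eq_of_subset_of_card_le h ((F.card_le hJ).trans_eq σ.2.2.symm)).symm⟩

theorem eq_of_subset (h : σ.1 ⊆ τ.1) : σ = τ :=
  Subtype.ext (Finset.eq_of_subset_of_card_le h (by rw [σ.2.2, τ.2.2]))

/-- The index of the `a`-th ray of a full-dimensional cone, in increasing order. -/
def ray (σ : FullCone F) : Fin d ↪o Fin k := σ.1.orderEmbOfFin σ.2.2

theorem ray_mem (σ : FullCone F) (a : Fin d) : σ.ray a ∈ σ.1 := Finset.orderEmbOfFin_mem _ _ a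

theorem exists_ray_eq {i : Fin k} (hi : i ∈ σ.1) : ∃ a, σ.ray a = i := by
  have : i ∈ Set.range σ.ray := by rwa [ray, Finset.range_orderEmbOfFin]
  exact this

/-- The matrix whose rows are the generators of a full-dimensional cone. -/
def rayMatrix (σ : FullCone F) : Matrix (Fin d) (Fin d) ℤ := Matrix.of fun a => F.v (σ.ray a)

/-- The generators of a full-dimensional cone, as a basis of `N ⊗ ℝ`. -/
noncomputable def basis (σ : FullCone F) : Module.Basis (Fin d) ℝ (Fin d → ℝ) :=
  basisOfLinearIndependentOfCardEqFinrank' (fun a => intPt (F.v (σ.ray a)))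
    ((F.simplicial σ.1 σ.2.1).comp (fun a => ⟨σ.ray a, σ.ray_mem a⟩)
      fun _ _ h => σ.ray.injective (congrArg Subtype.val h)) (by simp)

@[simp]
theorem basis_apply (σ : FullCone F) (a : Fin d) : σ.basis a = intPt (F.v (σ.ray a)) :=
  congrFun (coe_basisOfLinearIndependentOfCardEqFinrank' _ _ _) a

theorem repr_intPt_ray (σ : FullCone F) (a : Fin d) :
    σ.basis.repr (intPt (F.v (σ.ray a))) = Finsupp.single a 1 := by
  rw [← basis_apply, Module.Basis.repr_self]

theorem repr_nonneg_of_mem (hx : x ∈ realCone F.v σ.1) (a : Fin d) : 0 ≤ σ.basis.repr x a := by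
  obtain ⟨c, hc, hcσ, rfl⟩ := mem_realCone_iff.1 hx
  rw [map_sum, Finsupp.finsetSum_apply]
  refine Finset.sum_nonneg fun i _ => ?_
  rw [map_smul, Finsupp.smul_apply, smul_eq_mul]
  by_cases hi : i ∈ σ.1
  · obtain ⟨b, rfl⟩ := exists_ray_eq hi
    rw [repr_intPt_ray, Finsupp.single_apply]
    exact mul_nonneg (hc _) (by split_ifs <;> norm_num)
  · rw [hcσ i hi, zero_mul]

theorem mem_realCone_iff_repr_nonneg :
    x ∈ realCone F.v σ.1 ↔ ∀ a, 0 ≤ σ.basis.repr x a := by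
  refine ⟨repr_nonneg_of_mem, fun h => ?_⟩
  rw [← σ.basis.sum_repr x]
  refine Finset.sum_induction _ (· ∈ realCone F.v σ.1) (fun _ _ => add_mem_realCone)
    (zero_mem_realCone _ _) fun a _ => ?_
  rw [basis_apply]
  exact smul_mem_realCone (h a) (intPt_mem_realCone (σ.ray_mem a))

theorem mem_coneSpan_erase_iff (σ : FullCone F) (a : Fin d) :
    x ∈ coneSpan F.v (σ.1.erase (σ.ray a)) ↔ σ.basis.repr x a = 0 := by
  constructor
  · intro hx
    induction hx using Submodule.span_induction with
    | mem y hy =>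
      obtain ⟨i, hi, rfl⟩ := hy
      obtain ⟨hia, hi⟩ := Finset.mem_erase.1 hi
      obtain ⟨b, rfl⟩ := exists_ray_eq hi
      simp only [repr_intPt_ray]
      exact Finsupp.single_eq_of_ne fun hba => hia (congrArg σ.ray hba.symm)
    | zero => simp
    | add y z _ _ hy hz => simp [hy, hz]
    | smul t y _ hy => simp [hy]
  · intro hx
    rw [← σ.basis.sum_repr x]
    refine Submodule.sum_mem _ fun b _ => ?_
    rcases eq_or_ne b a with rfl | hb
    · rw [hx, zero_smul]
      exact Submodule.zero_mem _
    · rw [basis_apply]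
      exact Submodule.smul_mem _ _ (Submodule.subset_span
        ⟨_, by simp [hb, σ.ray_mem b], rfl⟩)

theorem subset_of_repr_pos (hJ : J ∈ F.cones) (hpos : ∀ a, 0 < σ.basis.repr x a)
    (hx : x ∈ realCone F.v J) : σ.1 ⊆ J := by
  intro i hi
  obtain ⟨a, rfl⟩ := exists_ray_eq hi
  have hσJ : x ∈ realCone F.v (σ.1 ∩ J) := by
    rw [← F.inter _ σ.2.1 _ hJ]
    exact ⟨mem_realCone_iff_repr_nonneg.2 fun b => (hpos b).le, hx⟩
  by_contra ha
  have hsub : σ.1 ∩ J ⊆ σ.1.erase (σ.ray a) := fun j hj =>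
    Finset.mem_erase.2 ⟨fun h => ha (h ▸ Finset.mem_of_mem_inter_right hj),
      Finset.mem_of_mem_inter_left hj⟩
  exact (hpos a).ne' ((σ.mem_coneSpan_erase_iff a).1
    (realCone_subset_coneSpan _ _ (realCone_mono hsub hσJ)))

end FullCone

end SimplicialFan

section HalfOpen

open Filter Topology

theorem eventually_nhdsGT_add_mul_pos {c s : ℝ} (hc : 0 ≤ c) (hs : c = 0 → 0 < s) :
    ∀ᶠ ε in 𝓝[>] 0, 0 < c + ε * s := by
  rcases hc.eq_or_lt with rfl | hc
  · filter_upwards [self_mem_nhdsWithin] with ε hε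
    rw [zero_add]
    exact mul_pos hε (hs rfl)
  · have hcont : ContinuousAt (fun ε : ℝ => c + ε * s) 0 := by fun_prop
    exact nhdsWithin_le_nhds (hcont.eventually (lt_mem_nhds (by simpa using hc)))

theorem eventually_nhdsGT_add_mul_nonneg {c s : ℝ} (hc : 0 ≤ c) (hs : c = 0 → 0 ≤ s) :
    ∀ᶠ ε in 𝓝[>] 0, 0 ≤ c + ε * s := by
  rcases hc.eq_or_lt with rfl | hc
  · filter_upwards [self_mem_nhdsWithin] with ε hε
    rw [zero_add]
    exact mul_nonneg (le_of_lt hε) (hs rfl)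
  · exact (eventually_nhdsGT_add_mul_pos hc.le fun h => absurd h hc.ne').mono fun _ => le_of_lt

theorem nonneg_of_frequently_nhdsGT {c s : ℝ} (h : ∃ᶠ ε in 𝓝[>] 0, 0 ≤ c + ε * s) :
    0 ≤ c ∧ (c = 0 → 0 ≤ s) := by
  constructor
  · by_contra! hc
    have hneg := eventually_nhdsGT_add_mul_pos (s := -s) (neg_pos.2 hc).le fun h0 => by linarith
    obtain ⟨ε, hε, hε'⟩ := (h.and_eventually hneg).exists
    linarith
  · rintro rfl
    obtain ⟨ε, hε, hpos⟩ := (h.and_eventually self_mem_nhdsWithin).exists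
    rw [zero_add] at hε
    exact nonneg_of_mul_nonneg_right hε hpos

variable {d k : ℕ} {F : StackyFan d k} {σ τ : FullCone F} {q x ξ : Fin d → ℝ}

namespace FullCone

/-- `x` belongs to the half-open cone obtained from `σ` by removing the facets through which the
direction `q` does not enter `σ`: for small `ε > 0`, the point `x + ε q` is in the interior
of `σ`. -/
def HalfOpen (σ : FullCone F) (q x : Fin d → ℝ) : Prop :=
  ∀ a, 0 ≤ σ.basis.repr x a ∧ (σ.basis.repr x a = 0 → 0 < σ.basis.repr q a)

namespace HalfOpen

theorem mem_realCone (h : σ.HalfOpen q x) : x ∈ realCone F.v σ.1 :=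
  mem_realCone_iff_repr_nonneg.2 fun a => (h a).1

theorem eventually_repr_pos (h : σ.HalfOpen q x) :
    ∀ᶠ ε : ℝ in 𝓝[>] 0, ∀ a, 0 < σ.basis.repr (x + ε • q) a := by
  refine eventually_all.2 fun a => ?_
  simpa using eventually_nhdsGT_add_mul_pos (h a).1 (h a).2

theorem eventually_mem_realCone (h : σ.HalfOpen q x) :
    ∀ᶠ ε : ℝ in 𝓝[>] 0, x + ε • q ∈ realCone F.v σ.1 :=
  h.eventually_repr_pos.mono fun _ hε => mem_realCone_iff_repr_nonneg.2 fun a => (hε a).le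

theorem unique (hσ : σ.HalfOpen q x) (hτ : τ.HalfOpen q x) : σ = τ := by
  obtain ⟨ε, hεσ, hετ⟩ := (hσ.eventually_repr_pos.and hτ.eventually_mem_realCone).exists
  exact eq_of_subset (subset_of_repr_pos τ.2.1 hεσ hετ)

end HalfOpen

end FullCone

/-- `q` lies on no hyperplane spanned by the generators of a cone, so that moving in the direction
`q` leaves every lower-dimensional cone. -/
def IsGeneric (F : StackyFan d k) (q : Fin d → ℝ) : Prop :=
  ∀ J ∈ F.cones, J.card < d → q ∉ coneSpan F.v J

theorem eventually_nhdsGT_add_smul_notMem (W : Submodule ℝ (Fin d → ℝ)) (hx : x ∉ W)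
    (y : Fin d → ℝ) : ∀ᶠ ε : ℝ in 𝓝[>] 0, y + ε • x ∉ W := by
  by_cases hy : y ∈ W
  · filter_upwards [self_mem_nhdsWithin] with ε (hε : 0 < ε)
    rwa [W.add_mem_iff_right hy, W.smul_mem_iff hε.ne']
  · have hcont : ContinuousAt (fun ε : ℝ => y + ε • x) 0 := by fun_prop
    refine nhdsWithin_le_nhds (hcont.eventually
      (W.closed_of_finiteDimensional.isOpen_compl.mem_nhds ?_))
    simpa using hy

theorem IsGeneric.eventually_add_smul (hx : IsGeneric F x) (y : Fin d → ℝ) :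
    ∀ᶠ ε : ℝ in 𝓝[>] 0, IsGeneric F (y + ε • x) := by
  refine (eventually_all_finset _).2 fun J hJ => ?_
  by_cases hJd : J.card < d
  · filter_upwards [eventually_nhdsGT_add_smul_notMem _ (hx J hJ hJd) y] with ε hε _ using hε
  · exact .of_forall fun _ h => absurd h hJd

theorem exists_isGeneric (F : StackyFan d k) : ∃ x, IsGeneric F x := by
  classical
  let W := (F.cones.filter (·.card < d)).image (coneSpan F.v)
  have hW : ⊤ ∉ W := by
    intro h
    obtain ⟨J, hJ, hJtop⟩ := Finset.mem_image.1 h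
    exact coneSpan_ne_top F.v (Finset.mem_filter.1 hJ).2 hJtop
  obtain ⟨x, hx⟩ := (Set.ne_univ_iff_exists_notMem _).1
    (Subspace.biUnion_ne_univ_of_top_notMem hW)
  refine ⟨x, fun J hJ hJd hxJ => hx ?_⟩
  exact Set.mem_biUnion (Finset.mem_image_of_mem _ (Finset.mem_filter.2 ⟨hJ, hJd⟩)) hxJ

theorem eventually_sum_add_smul_mem_Kcone {v : Fin k → Fin d → ℤ}
    (hv : coneSpan v Finset.univ = ⊤) (x : Fin d → ℝ) :
    ∀ᶠ ε : ℝ in 𝓝[>] 0, ∑ i, intPt (v i) + ε • x ∈ Kcone v := by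
  have hx : x ∈ coneSpan v Finset.univ := hv ▸ Submodule.mem_top
  rw [coneSpan, Finset.coe_univ, Set.image_univ, Submodule.mem_span_range_iff_exists_fun] at hx
  obtain ⟨c, rfl⟩ := hx
  have hpos : ∀ᶠ ε : ℝ in 𝓝[>] 0, ∀ i, 0 < 1 + ε * c i := eventually_all.2 fun i =>
    eventually_nhdsGT_add_mul_pos zero_le_one fun h => absurd h one_ne_zero
  filter_upwards [hpos] with ε hε
  rw [Kcone_eq_realCone_univ, mem_realCone_iff]
  refine ⟨fun i => 1 + ε * c i, fun i => (hε i).le, by simp, ?_⟩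
  simp only [add_smul, one_smul, mul_smul, Finset.sum_add_distrib, Finset.smul_sum]

theorem exists_isGeneric_mem_Kcone (hv : coneSpan F.v Finset.univ = ⊤) :
    ∃ p ∈ Kcone F.v, IsGeneric F p := by
  obtain ⟨x, hx⟩ := exists_isGeneric F
  obtain ⟨ε, hK, hgen⟩ := ((eventually_sum_add_smul_mem_Kcone hv x).and
    (hx.eventually_add_smul (∑ i, intPt (F.v i)))).exists
  exact ⟨_, hK, hgen⟩

theorem IsGeneric.repr_ne_zero (hq : IsGeneric F q) (σ : FullCone F) (a : Fin d) :
    σ.basis.repr q a ≠ 0 := by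
  refine fun h => hq _ (F.downClosed _ σ.2.1 _ (Finset.erase_subset _ _)) ?_
    ((σ.mem_coneSpan_erase_iff a).2 h)
  exact (Finset.card_erase_lt_of_mem (σ.ray_mem a)).trans_eq σ.2.2

theorem IsGeneric.card_eq_of_frequently (hq : IsGeneric F q) {J : Finset (Fin k)}
    (hJ : J ∈ F.cones) (h : ∃ᶠ ε : ℝ in 𝓝[>] 0, x + ε • q ∈ realCone F.v J) : J.card = d := by
  by_contra hne
  have hlow := hq J hJ (lt_of_le_of_ne (F.card_le hJ) hne)
  obtain ⟨ε, hε, hε'⟩ := (h.and_eventually (eventually_nhdsGT_add_smul_notMem _ hlow x)).exists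
  exact hε' (realCone_subset_coneSpan _ _ hε)

theorem IsGeneric.exists_halfOpen (hq : IsGeneric F q)
    (h : ∀ᶠ ε : ℝ in 𝓝[>] 0, x + ε • q ∈ support F) : ∃ σ : FullCone F, σ.HalfOpen q x := by
  obtain ⟨J, hJ, hfreq⟩ : ∃ J ∈ F.cones, ∃ᶠ ε : ℝ in 𝓝[>] 0, x + ε • q ∈ realCone F.v J := by
    by_contra! hn
    obtain ⟨ε, hε, hn⟩ := (h.and ((eventually_all_finset _).2 hn)).exists
    obtain ⟨J, hJ, hx⟩ := Set.mem_iUnion₂.1 hε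
    exact hn J hJ hx
  let σ : FullCone F := ⟨J, hJ, hq.card_eq_of_frequently hJ hfreq⟩
  refine ⟨σ, fun a => ?_⟩
  have hfreq' : ∃ᶠ ε in 𝓝[>] 0, 0 ≤ σ.basis.repr x a + ε * σ.basis.repr q a :=
    hfreq.mono fun ε hε => by simpa using FullCone.repr_nonneg_of_mem (σ := σ) hε a
  have hnonneg := nonneg_of_frequently_nhdsGT hfreq'
  exact ⟨hnonneg.1, fun h0 => (hnonneg.2 h0).lt_of_ne (hq.repr_ne_zero σ a).symm⟩

/-- `x ∈ K` and `x + ε ξ ∈ K` for all sufficiently small `ε > 0`: the condition defining the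
generators of the shadow module in the direction `ξ`. -/
def PointsInto (F : StackyFan d k) (ξ x : Fin d → ℝ) : Prop :=
  x ∈ Kcone F.v ∧ ∀ᶠ ε : ℝ in 𝓝[>] 0, x + ε • ξ ∈ Kcone F.v

/-- Pushing `ξ` slightly into the interior of `K`, in a generic direction, does not change the
lattice points that see `K` in the direction `ξ`. -/
theorem exists_pointsInto_iff_exists_halfOpen (hv : coneSpan F.v Finset.univ = ⊤)
    (hF : support F = Kcone F.v) (ξ : Fin d → ℝ) :
    ∃ q, ∀ x, PointsInto F ξ x ↔ ∃ σ : FullCone F, σ.HalfOpen q x := by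
  obtain ⟨p, hpK, hp⟩ := exists_isGeneric_mem_Kcone hv
  have hneg : ∀ᶠ δ : ℝ in 𝓝[>] 0, ∀ (σ : FullCone F) a,
      σ.basis.repr ξ a < 0 → σ.basis.repr (ξ + δ • p) a < 0 := by
    refine eventually_all.2 fun σ => eventually_all.2 fun a => eventually_imp_distrib_left.2
      fun hξ => ?_
    filter_upwards [eventually_nhdsGT_add_mul_pos (s := -σ.basis.repr p a) (neg_pos.2 hξ).le
      fun h0 => by linarith] with δ hδ
    simp only [map_add, map_smul, Finsupp.add_apply, Finsupp.smul_apply, smul_eq_mul]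
    linarith
  obtain ⟨δ, ⟨hqneg, hqgen⟩, hδ : 0 < δ⟩ :=
    ((hneg.and (hp.eventually_add_smul ξ)).and self_mem_nhdsWithin).exists
  refine ⟨ξ + δ • p, fun x => ⟨fun ⟨_, hx⟩ => hqgen.exists_halfOpen ?_, fun ⟨σ, hσ⟩ => ?_⟩⟩
  · filter_upwards [hx, self_mem_nhdsWithin] with ε hε (hpos : 0 < ε)
    rw [Kcone_eq_realCone_univ] at hpK hε
    rw [hF, Kcone_eq_realCone_univ, smul_add, ← add_assoc]
    exact add_mem_realCone hε (smul_mem_realCone hpos.le (smul_mem_realCone hδ.le hpK))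
  · have hξ (a) (h0 : σ.basis.repr x a = 0) : 0 ≤ σ.basis.repr ξ a :=
      le_of_not_gt fun h => ((hσ a).2 h0).not_gt (hqneg σ a h)
    refine ⟨realCone_subset_Kcone _ _ hσ.mem_realCone, ?_⟩
    filter_upwards [eventually_all.2 fun a => eventually_nhdsGT_add_mul_nonneg (hσ a).1 (hξ a)]
      with ε hε
    exact realCone_subset_Kcone _ _
      (FullCone.mem_realCone_iff_repr_nonneg.2 fun a => by simpa using hε a)

theorem mem_shadowPts_iff {χ : Fin d → ℝ} {n : Fin d → ℤ} :
    intPt n + χ ∈ ShadowPts F χ ξ ↔ PointsInto F ξ (intPt n + χ) :=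
  ⟨fun ⟨_, hK, ε₀, hε₀, h⟩ => ⟨hK, mem_nhdsGT_iff_exists_Ioc_subset.2
      ⟨ε₀, hε₀, fun ε hε => h ε hε.1 hε.2⟩⟩,
    fun ⟨hK, h⟩ => by
      obtain ⟨ε₀, hε₀, h⟩ := mem_nhdsGT_iff_exists_Ioc_subset.1 h
      exact ⟨⟨n, fun _ => rfl⟩, hK, ε₀, hε₀, fun ε h0 h1 => h ⟨h0, h1⟩⟩⟩

end HalfOpen

section Rank

theorem GKZSetting.exists_rank {d k : ℕ} (S : GKZSetting d k) (q : Fin d → ℝ) :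
    ∃ rk : FullCone S.F → ℕ, ∀ (σ τ : FullCone S.F) (x : Fin d → ℝ), σ.HalfOpen q x →
      x ∈ realCone S.F.v τ.1 → τ ≠ σ → rk τ < rk σ := by
  classical
  obtain ⟨η, -, hη⟩ := S.hreg
  choose L hL hlt using fun σ : FullCone S.F => hη σ.1 σ.isMaxCone
  have hLq (σ τ : FullCone S.F) (x : Fin d → ℝ) (hσ : σ.HalfOpen q x)
      (hxτ : x ∈ realCone S.F.v τ.1) (hne : τ ≠ σ) : L τ q < L σ q := by
    obtain ⟨ε, ⟨hpos, hmem⟩, hε : 0 < ε⟩ := ((hσ.eventually_repr_pos.and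
      hσ.eventually_mem_realCone).and self_mem_nhdsWithin).exists
    have hnot : x + ε • q ∉ realCone S.F.v τ.1 := fun h =>
      hne (FullCone.eq_of_subset (FullCone.subset_of_repr_pos τ.2.1 hpos h)).symm
    have hη_lt := hlt τ _ (realCone_subset_Kcone _ _ hmem) hnot
    rw [hL σ _ hmem, map_add, map_add, ← hL τ x hxτ, ← hL σ x hσ.mem_realCone, add_lt_add_iff_left,
      map_smul, map_smul] at hη_lt
    exact lt_of_smul_lt_smul_of_nonneg_left hη_lt hε.le
  refine ⟨fun σ => (Finset.univ.filter fun τ => L τ q < L σ q).card,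
    fun σ τ x hσ hxτ hne => Finset.card_lt_card (Finset.ssubset_iff_of_subset ?_ |>.2 ?_)⟩
  · exact Finset.monotone_filter_right _ fun ρ _ hρ => hρ.trans (hLq σ τ x hσ hxτ hne)
  · exact ⟨τ, by simp [hLq σ τ x hσ hxτ hne], by simp⟩

end Rank

section LatticeIndex

open Matrix

theorem card_quotient_range_vecMulLinear {n : Type*} [Fintype n] [DecidableEq n]
    (A : Matrix n n ℤ) (hA : A.det ≠ 0) :
    Nat.card ((n → ℤ) ⧸ LinearMap.range A.vecMulLinear) = A.det.natAbs := by
  have hli : LinearIndependent ℤ A.row := linearIndependent_rows_of_det_ne_zero hA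
  rw [range_vecMulLinear, ← Submodule.natAbs_det_basis_change (Pi.basisFun ℤ n) _
    (Module.Basis.span hli), Pi.basisFun_det_apply]
  congr 2
  ext i j
  exact congrFun (congrArg Subtype.val (Module.Basis.span_apply hli i)) j

/-- The largest integer `n` with `n ≤ c` (if `0 < s`), respectively `n < c` (otherwise). -/
noncomputable def halfOpenFloor (s c : ℝ) : ℤ :=
  open Classical in if 0 < s then ⌊c⌋ else ⌈c⌉ - 1

theorem halfOpenFloor_intCast_add (s : ℝ) (m : ℤ) (c : ℝ) :
    halfOpenFloor s (m + c) = m + halfOpenFloor s c := by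
  unfold halfOpenFloor
  split_ifs
  · exact Int.floor_intCast_add m c
  · rw [Int.ceil_intCast_add, add_sub_assoc]

theorem halfOpenFloor_nonneg_iff {s c : ℝ} :
    0 ≤ halfOpenFloor s c ↔ 0 ≤ c ∧ (c = 0 → 0 < s) := by
  unfold halfOpenFloor
  split_ifs with hs
  · simp [Int.floor_nonneg, hs]
  · rw [sub_nonneg, Int.one_le_ceil_iff, lt_iff_le_and_ne]
    exact and_congr_right fun _ => ⟨fun h h0 => absurd h0.symm h, fun h h0 => hs (h h0.symm)⟩

end LatticeIndex

section LatticePoints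

open Matrix

variable {d k : ℕ} {F : StackyFan d k} {q χ : Fin d → ℝ}

namespace FullCone

theorem det_rayMatrix_ne_zero (σ : FullCone F) : σ.rayMatrix.det ≠ 0 := by
  have hunit := (Pi.basisFun ℝ (Fin d)).isUnit_det σ.basis
  have hmap : Matrix.of σ.basis = σ.rayMatrix.map (Int.castRingHom ℝ) := by
    ext a j
    simp [rayMatrix, intPt]
  rw [Pi.basisFun_det_apply, hmap, ← RingHom.mapMatrix_apply, ← RingHom.map_det] at hunit
  exact fun h => hunit.ne_zero (by rw [h, map_zero])

theorem intPt_vecMul_rayMatrix (σ : FullCone F) (m : Fin d → ℤ) :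
    intPt (m ᵥ* σ.rayMatrix) = ∑ a, (m a : ℝ) • σ.basis a := by
  ext j
  simp [intPt, vecMul, dotProduct, rayMatrix]

/-- The coordinates of `n + χ` in the basis of `σ`, rounded so that `n + χ` is in the half-open
cone of `σ` in the direction `q` exactly when they are all nonnegative. -/
noncomputable def floorCoord (σ : FullCone F) (q χ : Fin d → ℝ) (n : Fin d → ℤ) : Fin d → ℤ :=
  fun a => halfOpenFloor (σ.basis.repr q a) (σ.basis.repr (intPt n + χ) a)

theorem floorCoord_vecMul_add (σ : FullCone F) (q χ : Fin d → ℝ) (m n : Fin d → ℤ) :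
    σ.floorCoord q χ (m ᵥ* σ.rayMatrix + n) = m + σ.floorCoord q χ n := by
  ext a
  have hm : σ.basis.repr (intPt (m ᵥ* σ.rayMatrix)) a = m a := by
    rw [intPt_vecMul_rayMatrix, Module.Basis.repr_sum_self]
  rw [floorCoord, intPt_add, add_assoc, map_add, Finsupp.add_apply, hm, halfOpenFloor_intCast_add]
  rfl

theorem halfOpen_iff_floorCoord_nonneg {σ : FullCone F} {n : Fin d → ℤ} :
    σ.HalfOpen q (intPt n + χ) ↔ 0 ≤ σ.floorCoord q χ n :=
  forall_congr' fun _ => halfOpenFloor_nonneg_iff.symm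

/-- The lattice points `n` for which `n + χ` lies in the half-open fundamental parallelepiped
of `σ`. -/
def box (σ : FullCone F) (q χ : Fin d → ℝ) : Set (Fin d → ℤ) := {n | σ.floorCoord q χ n = 0}

theorem mk_box_bijective (σ : FullCone F) (q χ : Fin d → ℝ) :
    Function.Bijective fun n : σ.box q χ =>
      (Submodule.Quotient.mk n.1 : (Fin d → ℤ) ⧸ LinearMap.range σ.rayMatrix.vecMulLinear) := by
  constructor
  · rintro ⟨n, hn : σ.floorCoord q χ n = 0⟩ ⟨n', hn' : σ.floorCoord q χ n' = 0⟩ h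
    obtain ⟨m, hm⟩ := (Submodule.Quotient.eq _).1 h
    obtain rfl : n = m ᵥ* σ.rayMatrix + n' := sub_eq_iff_eq_add.1 hm.symm
    have hm0 : m = 0 := by
      have hfloor := σ.floorCoord_vecMul_add q χ m n'
      rwa [hn, hn', add_zero, eq_comm] at hfloor
    simp [hm0]
  · intro y
    obtain ⟨n, rfl⟩ := Submodule.Quotient.mk_surjective _ y
    refine ⟨⟨-σ.floorCoord q χ n ᵥ* σ.rayMatrix + n, ?_⟩,
      (Submodule.Quotient.eq _).2 ⟨-σ.floorCoord q χ n, ?_⟩⟩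
    · exact (σ.floorCoord_vecMul_add q χ _ n).trans (neg_add_cancel _)
    · rw [add_sub_cancel_right]
      rfl

theorem natCard_box (σ : FullCone F) (q χ : Fin d → ℝ) :
    Nat.card (σ.box q χ) = σ.rayMatrix.det.natAbs :=
  (Nat.card_congr (.ofBijective _ (σ.mk_box_bijective q χ))).trans
    (card_quotient_range_vecMulLinear _ σ.det_rayMatrix_ne_zero)

instance (σ : FullCone F) (q χ : Fin d → ℝ) : Finite (σ.box q χ) :=
  Nat.finite_of_card_ne_zero
    (σ.natCard_box q χ ▸ Int.natAbs_ne_zero.2 σ.det_rayMatrix_ne_zero)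

end FullCone

/-- The box points of all full-dimensional cones of the fan. -/
abbrev FanBox (F : StackyFan d k) (q χ : Fin d → ℝ) := Σ σ : FullCone F, σ.box q χ

noncomputable instance (F : StackyFan d k) (q χ : Fin d → ℝ) : Fintype (FanBox F q χ) :=
  Fintype.ofFinite _

theorem card_fanBox (F : StackyFan d k) (q χ : Fin d → ℝ) :
    Fintype.card (FanBox F q χ) = ∑ σ : FullCone F, σ.rayMatrix.det.natAbs := by
  rw [← Nat.card_eq_fintype_card, Nat.card_sigma]
  exact Finset.sum_congr rfl fun σ _ => σ.natCard_box q χ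

namespace FanBox

/-- The translate of a box point of `σ` by the combination of the generators of `σ` with
coefficients `m`. -/
def point (b : FanBox F q χ) (m : Fin d →₀ ℕ) : Fin d → ℤ :=
  (fun a => (m a : ℤ)) ᵥ* b.1.rayMatrix + b.2

theorem point_add_single (b : FanBox F q χ) (m : Fin d →₀ ℕ) (a : Fin d) :
    b.point (m + Finsupp.single a 1) = F.v (b.1.ray a) + b.point m := by
  have hcast : (fun c => (((m + Finsupp.single a 1 : Fin d →₀ ℕ) c : ℕ) : ℤ)) =
      Pi.single a 1 + fun c => (m c : ℤ) := by
    ext c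
    simp [Finsupp.single_apply, Pi.single_apply, add_comm, eq_comm]
  rw [point, hcast, add_vecMul, single_one_vecMul, add_assoc]
  rfl

theorem floorCoord_point (b : FanBox F q χ) (m : Fin d →₀ ℕ) :
    b.1.floorCoord q χ (b.point m) = fun a => (m a : ℤ) := by
  rw [point, FullCone.floorCoord_vecMul_add, show b.1.floorCoord q χ b.2 = 0 from b.2.2, add_zero]

theorem halfOpen_point (b : FanBox F q χ) (m : Fin d →₀ ℕ) :
    b.1.HalfOpen q (intPt (b.point m) + χ) := by
  rw [FullCone.halfOpen_iff_floorCoord_nonneg, floorCoord_point]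
  exact fun a => Int.natCast_nonneg _

theorem point_injective :
    Function.Injective fun p : Σ _ : FanBox F q χ, (Fin d →₀ ℕ) => p.1.point p.2 := by
  rintro ⟨⟨σ, n⟩, m⟩ ⟨⟨τ, n'⟩, m'⟩ (h : point ⟨σ, n⟩ m = point ⟨τ, n'⟩ m')
  obtain rfl : σ = τ := (halfOpen_point ⟨σ, n⟩ m).unique (h ▸ halfOpen_point ⟨τ, n'⟩ m')
  have hfloor := floorCoord_point ⟨σ, n⟩ m
  rw [h, floorCoord_point ⟨σ, n'⟩ m'] at hfloor
  obtain rfl : m' = m := Finsupp.ext fun a => Int.ofNat_inj.1 (congrFun hfloor a)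
  obtain rfl : n = n' := Subtype.ext (add_left_cancel h)
  rfl

theorem exists_point_eq {σ : FullCone F} {n : Fin d → ℤ} (h : σ.HalfOpen q (intPt n + χ)) :
    ∃ (b : FanBox F q χ) (m : Fin d →₀ ℕ), b.1 = σ ∧ b.point m = n := by
  rw [FullCone.halfOpen_iff_floorCoord_nonneg] at h
  set c := σ.floorCoord q χ n
  have hbox : -c ᵥ* σ.rayMatrix + n ∈ σ.box q χ :=
    (σ.floorCoord_vecMul_add q χ _ n).trans (neg_add_cancel _)
  refine ⟨⟨σ, _, hbox⟩, Finsupp.equivFunOnFinite.symm fun a => (c a).toNat, rfl, ?_⟩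
  have htoNat : (fun a => ((c a).toNat : ℤ)) = c := funext fun a => Int.toNat_of_nonneg (h a)
  change (fun a => ((c a).toNat : ℤ)) ᵥ* σ.rayMatrix + (-c ᵥ* σ.rayMatrix + n) = n
  rw [htoNat, neg_vecMul, add_neg_cancel_left]

end FanBox

end LatticePoints

section CommonCone

variable {d k : ℕ} {F : StackyFan d k} {x y z : Fin d → ℝ}

/-- Three points lie in a common cone of the fan. -/
def CommonCone₃ (F : StackyFan d k) (x y z : Fin d → ℝ) : Prop :=
  ∃ I ∈ F.cones, x ∈ realCone F.v I ∧ y ∈ realCone F.v I ∧ z ∈ realCone F.v I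

theorem commonCone₃_left_comm : CommonCone₃ F x y z ↔ CommonCone₃ F y x z := by
  simp only [CommonCone₃, and_left_comm]

theorem commonCone_and_commonCone_add_right :
    commonCone F y z ∧ commonCone F x (y + z) ↔ CommonCone₃ F x y z := by
  constructor
  · rintro ⟨⟨J, hJ, hy, hz⟩, I, hI, hx, hyz⟩
    exact ⟨I, hI, hx, F.mem_realCone_of_add_mem hI hJ hy hz hyz,
      F.mem_realCone_of_add_mem hI hJ hz hy (add_comm y z ▸ hyz)⟩
  · rintro ⟨I, hI, hx, hy, hz⟩
    exact ⟨⟨I, hI, hy, hz⟩, I, hI, hx, add_mem_realCone hy hz⟩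

theorem commonCone_and_commonCone_add_left :
    commonCone F x y ∧ commonCone F (x + y) z ↔ CommonCone₃ F x y z := by
  constructor
  · rintro ⟨⟨J, hJ, hx, hy⟩, I, hI, hxy, hz⟩
    exact ⟨I, hI, F.mem_realCone_of_add_mem hI hJ hx hy hxy,
      F.mem_realCone_of_add_mem hI hJ hy hx (add_comm x y ▸ hxy), hz⟩
  · rintro ⟨I, hI, hx, hy, hz⟩
    exact ⟨⟨I, hI, hx, hy⟩, I, hI, add_mem_realCone hx hy, hz⟩

theorem commonCone_zero_left (hF : support F = Kcone F.v) (hx : x ∈ Kcone F.v) :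
    commonCone F 0 x := by
  rw [← hF, support, Set.mem_iUnion₂] at hx
  obtain ⟨I, hI, hx⟩ := hx
  exact ⟨I, hI, zero_mem_realCone F.v I, hx⟩

theorem add_mem_Kcone {v : Fin k → Fin d → ℤ} (hx : x ∈ Kcone v) (hy : y ∈ Kcone v) :
    x + y ∈ Kcone v := by
  rw [Kcone_eq_realCone_univ] at *
  exact add_mem_realCone hx hy

theorem zero_mem_latticeK (v : Fin k → Fin d → ℤ) : 0 ∈ latticeK v := by
  change intPt 0 ∈ Kcone v
  rw [intPt_zero, Kcone_eq_realCone_univ]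
  exact zero_mem_realCone v _

end CommonCone

section Presentations

variable {𝕜 R V P : Type*} [CommRing 𝕜]

open scoped IsMulCommutative in
theorem exists_algHom_mvPolynomial_of_commute {B : Type*} [Ring B] [Algebra 𝕜 B] {x : P → B}
    (hx : ∀ a b, Commute (x a) (x b)) :
    ∃ f : MvPolynomial P 𝕜 →ₐ[𝕜] B, ∀ a, f (MvPolynomial.X a) = x a := by
  have : IsMulCommutative (Algebra.adjoin 𝕜 (Set.range x)) :=
    Algebra.isMulCommutative_adjoin 𝕜 (by rintro _ ⟨a, rfl⟩ _ ⟨b, rfl⟩; exact hx a b)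
  let y (a : P) : Algebra.adjoin 𝕜 (Set.range x) := ⟨x a, Algebra.subset_adjoin ⟨a, rfl⟩⟩
  refine ⟨(Algebra.adjoin 𝕜 (Set.range x)).val.comp (MvPolynomial.aeval y), fun a => ?_⟩
  rw [AlgHom.comp_apply, MvPolynomial.aeval_X]
  rfl

theorem exists_linearMap_quotient_span [Ring R] [Algebra 𝕜 R] [AddCommGroup V] [Module 𝕜 V]
    (ρ : R →ₐ[𝕜] Module.End 𝕜 V) (x : P → V) {s : Set (P →₀ R)}
    (hs : ∀ r ∈ s, (r.sum fun w c => ρ c (x w)) = 0) :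
    ∃ f : ((P →₀ R) ⧸ Submodule.span R s) →ₗ[𝕜] V,
      ∀ w, f (Submodule.Quotient.mk (Finsupp.single w 1)) = x w := by
  let : Module R V := Module.compHom V ρ.toRingHom
  have : IsScalarTower 𝕜 R V := .of_algebraMap_smul fun c y => by
    change ρ (algebraMap 𝕜 R c) y = c • y
    rw [AlgHom.commutes, Module.algebraMap_end_apply]
  have hker : Submodule.span R s ≤ LinearMap.ker (Finsupp.linearCombination R x) :=
    Submodule.span_le.2 hs
  refine ⟨((Submodule.span R s).liftQ _ hker).restrictScalars 𝕜, fun w => ?_⟩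
  rw [LinearMap.restrictScalars_apply, Submodule.liftQ_apply, Finsupp.linearCombination_single,
    one_smul]

end Presentations

section DeformedSemigroupRing

variable {d k : ℕ} {F : StackyFan d k} {χ : Fin d → ℝ}

theorem Rgen_mul_of_commonCone {a b c : latticeK F.v} (h : commonCone F (intPt a) (intPt b))
    (hc : (c : Fin d → ℤ) = a + b) : Rgen F a * Rgen F b = Rgen F c := by
  rw [Rgen, Rgen, Rgen, ← map_mul, Ideal.Quotient.eq]
  exact Ideal.subset_span (.inl (.inl ⟨a, b, c, h, hc, rfl⟩))

theorem Rgen_mul_of_not_commonCone {a b : latticeK F.v}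
    (h : ¬commonCone F (intPt a) (intPt b)) : Rgen F a * Rgen F b = 0 := by
  rw [Rgen, Rgen, ← map_mul, Ideal.Quotient.eq_zero_iff_mem]
  exact Ideal.subset_span (.inl (.inr ⟨a, b, h, rfl⟩))

theorem Rgen_zero (F : StackyFan d k) : Rgen F ⟨0, zero_mem_latticeK F.v⟩ = 1 := by
  rw [Rgen, ← map_one (Ideal.Quotient.mk (Ideal.span (relR F))), Ideal.Quotient.eq]
  exact Ideal.subset_span (.inr ⟨_, rfl, rfl⟩)

theorem adjoin_range_Rgen (F : StackyFan d k) : Algebra.adjoin ℂ (Set.range (Rgen F)) = ⊤ := by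
  have himage : Set.range (Rgen F) =
      Ideal.Quotient.mkₐ ℂ (Ideal.span (relR F)) '' Set.range MvPolynomial.X :=
    Set.range_comp _ _
  rw [himage, ← AlgHom.map_adjoin, MvPolynomial.adjoin_range_X, Algebra.map_top]
  exact AlgHom.range_eq_top _ |>.2 (Ideal.Quotient.mkₐ_surjective ℂ _)

theorem span_range_Rgen (F : StackyFan d k) : Submodule.span ℂ (Set.range (Rgen F)) = ⊤ := by
  rw [eq_top_iff, ← Algebra.top_toSubmodule, ← adjoin_range_Rgen, Algebra.adjoin_eq_span,
    Submodule.span_le]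
  have hclosure : ∀ r ∈ Submonoid.closure (Set.range (Rgen F)),
      r ∈ insert 0 (Set.range (Rgen F)) := by
    intro r hr
    induction hr using Submonoid.closure_induction with
    | mem r hr => exact .inr hr
    | one => exact .inr ⟨_, Rgen_zero F⟩
    | mul r s _ _ hr hs =>
      rcases hr with rfl | ⟨a, rfl⟩
      · exact .inl (zero_mul s)
      rcases hs with rfl | ⟨b, rfl⟩
      · exact .inl (mul_zero _)
      by_cases hab : commonCone F (intPt a) (intPt b)
      · have hmem : (a : Fin d → ℤ) + b ∈ latticeK F.v := by
          change intPt _ ∈ Kcone F.v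
          rw [intPt_add]
          exact add_mem_Kcone a.2 b.2
        exact .inr ⟨⟨_, hmem⟩, (Rgen_mul_of_commonCone hab rfl).symm⟩
      · exact .inl (Rgen_mul_of_not_commonCone hab)
  rw [← Submodule.span_insert_zero]
  exact fun r hr => Submodule.subset_span (hclosure r hr)

theorem Rgen_smul_Mgen_of_commonCone {a : latticeK F.v} {w w' : Ppts F.v χ}
    (h : commonCone F (intPt a) (intPt w + χ)) (hw' : (w' : Fin d → ℤ) = a + w) :
    Rgen F a • Mgen F χ w = Mgen F χ w' := by
  rw [Mgen, Mgen, ← Submodule.Quotient.mk_smul, Finsupp.smul_single, smul_eq_mul, mul_one,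
    Submodule.Quotient.eq]
  exact Submodule.subset_span (.inl ⟨a, w, w', h, hw', rfl⟩)

theorem Rgen_smul_Mgen_of_not_commonCone {a : latticeK F.v} {w : Ppts F.v χ}
    (h : ¬commonCone F (intPt a) (intPt w + χ)) : Rgen F a • Mgen F χ w = 0 := by
  rw [Mgen, ← Submodule.Quotient.mk_smul, Finsupp.smul_single, smul_eq_mul, mul_one,
    Submodule.Quotient.mk_eq_zero]
  exact Submodule.subset_span (.inr ⟨a, w, h, rfl⟩)

/-- The action of a lattice point of `K` by translation on the index set of `ℂ[𝚺;χ]`. -/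
def translate (a : latticeK F.v) (w : Ppts F.v χ) : Ppts F.v χ :=
  ⟨a + w, by
    change intPt _ + χ ∈ Kcone F.v
    rw [intPt_add, add_assoc]
    exact add_mem_Kcone a.2 w.2⟩

theorem intPt_translate (a : latticeK F.v) (w : Ppts F.v χ) :
    intPt (translate a w : Fin d → ℤ) + χ = intPt a + (intPt w + χ) := by
  rw [translate, intPt_add, add_assoc]

open Classical in
/-- The operator by which `[a]` should act on `ℂ[𝚺;χ]`, defined on the vector space that has the
symbols `[n+χ]` as basis by construction. -/
noncomputable def actionOp (χ : Fin d → ℝ) (a : latticeK F.v) :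
    Module.End ℂ (Ppts F.v χ →₀ ℂ) :=
  Finsupp.linearCombination ℂ fun w =>
    if commonCone F (intPt a) (intPt w + χ) then Finsupp.single (translate a w) 1 else 0

open Classical in
theorem actionOp_single (a : latticeK F.v) (w : Ppts F.v χ) :
    actionOp χ a (Finsupp.single w 1) = if commonCone F (intPt a) (intPt w + χ) then
      Finsupp.single (translate a w) 1 else 0 := by
  rw [actionOp, Finsupp.linearCombination_single, one_smul]

open Classical in
theorem actionOp_actionOp_single (a b : latticeK F.v) (w : Ppts F.v χ) :
    actionOp χ a (actionOp χ b (Finsupp.single w 1)) =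
      if CommonCone₃ F (intPt a) (intPt b) (intPt w + χ) then
        Finsupp.single (translate a (translate b w)) 1 else 0 := by
  simp only [← commonCone_and_commonCone_add_right, ite_and, actionOp_single,
    apply_ite (actionOp χ a), map_zero, intPt_translate]

open Classical in
theorem actionOp_commute (a b : latticeK F.v) : Commute (actionOp χ a) (actionOp χ b) := by
  refine Finsupp.basisSingleOne.ext fun w => ?_
  have htranslate : translate a (translate b w) = translate b (translate a w) :=
    Subtype.ext (add_left_comm _ _ _)
  simp only [Finsupp.coe_basisSingleOne, Module.End.mul_apply, actionOp_actionOp_single,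
    htranslate]
  exact if_congr commonCone₃_left_comm rfl rfl

open Classical in
theorem actionOp_mul_of_commonCone {a b c : latticeK F.v}
    (h : commonCone F (intPt a) (intPt b)) (hc : (c : Fin d → ℤ) = a + b) :
    actionOp χ a * actionOp χ b = actionOp χ c := by
  refine Finsupp.basisSingleOne.ext fun w => ?_
  have htranslate : translate a (translate b w) = translate c w :=
    Subtype.ext (by simp only [translate, hc, add_assoc])
  simp only [Finsupp.coe_basisSingleOne, Module.End.mul_apply, actionOp_actionOp_single,
    htranslate]
  rw [actionOp_single, hc, intPt_add]
  exact if_congr (commonCone_and_commonCone_add_left.symm.trans (and_iff_right h)) rfl rfl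

theorem actionOp_mul_of_not_commonCone {a b : latticeK F.v}
    (h : ¬commonCone F (intPt a) (intPt b)) :
    actionOp χ a * actionOp χ b = 0 := by
  refine Finsupp.basisSingleOne.ext fun w => ?_
  simp only [Finsupp.coe_basisSingleOne, Module.End.mul_apply, actionOp_actionOp_single,
    ← commonCone_and_commonCone_add_left, h, false_and, if_false, LinearMap.zero_apply]

theorem actionOp_of_eq_zero (hF : support F = Kcone F.v) {a : latticeK F.v}
    (ha : (a : Fin d → ℤ) = 0) : actionOp χ a = 1 := by
  refine Finsupp.basisSingleOne.ext fun w => ?_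
  have htranslate : translate a w = w := Subtype.ext (by simp only [translate, ha, zero_add])
  have hcommon : commonCone F (intPt a) (intPt w + χ) := by
    rw [ha, intPt_zero]
    exact commonCone_zero_left hF w.2
  rw [Finsupp.coe_basisSingleOne, actionOp_single, if_pos hcommon, htranslate,
    Module.End.one_apply]

theorem exists_algHom_Rgen (hF : support F = Kcone F.v) (χ : Fin d → ℝ) :
    ∃ ρ : Rring F →ₐ[ℂ] Module.End ℂ (Ppts F.v χ →₀ ℂ), ∀ a, ρ (Rgen F a) = actionOp χ a := by
  obtain ⟨f, hf⟩ := exists_algHom_mvPolynomial_of_commute (𝕜 := ℂ) (x := actionOp (F := F) χ)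
    actionOp_commute
  have hker : Ideal.span (relR F) ≤ RingHom.ker f := by
    rw [Ideal.span_le]
    rintro p ((⟨a, b, c, hab, hc, rfl⟩ | ⟨a, b, hab, rfl⟩) | ⟨a, ha, rfl⟩)
    · rw [SetLike.mem_coe, RingHom.mem_ker, map_sub, map_mul, hf, hf, hf, sub_eq_zero]
      exact actionOp_mul_of_commonCone hab hc
    · rw [SetLike.mem_coe, RingHom.mem_ker, map_mul, hf, hf]
      exact actionOp_mul_of_not_commonCone hab
    · rw [SetLike.mem_coe, RingHom.mem_ker, map_sub, hf, map_one, sub_eq_zero]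
      exact actionOp_of_eq_zero hF ha
  exact ⟨Ideal.Quotient.liftₐ _ f hker, fun a => hf a⟩

theorem linearIndependent_Mgen (hF : support F = Kcone F.v) (χ : Fin d → ℝ) :
    LinearIndependent ℂ (Mgen F χ) := by
  obtain ⟨ρ, hρ⟩ := exists_algHom_Rgen hF χ
  obtain ⟨f, hf⟩ := exists_linearMap_quotient_span (s := relM F χ) ρ
    (fun w => Finsupp.single w (1 : ℂ)) (by
      rintro r (⟨a, w, w', haw : commonCone F (intPt a) (intPt w.1 + χ), hw', rfl⟩ |
        ⟨a, w, haw : ¬commonCone F (intPt a) (intPt w.1 + χ), rfl⟩)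
      · have hw : w' = translate a w := Subtype.ext hw'
        rw [Finsupp.sum_sub_index (by simp), Finsupp.sum_single_index (by simp),
          Finsupp.sum_single_index (by simp), hρ, actionOp_single, map_one, Module.End.one_apply,
          if_pos haw, hw, sub_self]
      · rw [Finsupp.sum_single_index (by simp), hρ, actionOp_single, if_neg haw])
  have hbasis : f ∘ Mgen F χ = Finsupp.basisSingleOne := by
    rw [Finsupp.coe_basisSingleOne]
    exact funext hf
  exact .of_comp f (hbasis ▸ Finsupp.basisSingleOne.linearIndependent)

end DeformedSemigroupRing

section ShadowBasis

variable {d k : ℕ} {F : StackyFan d k} {q ξ χ x y : Fin d → ℝ}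

theorem PointsInto.add_left (hx : PointsInto F ξ x) (hy : y ∈ Kcone F.v) :
    PointsInto F ξ (y + x) :=
  ⟨add_mem_Kcone hy hx.1, hx.2.mono fun ε hε => add_assoc y x (ε • ξ) ▸ add_mem_Kcone hy hε⟩

theorem ShadowSub_eq_span (F : StackyFan d k) (χ ξ : Fin d → ℝ) :
    ShadowSub F χ ξ =
      Submodule.span (Rring F) (Mgen F χ '' {w | PointsInto F ξ (intPt w.1 + χ)}) := by
  refine congrArg _ (Set.ext fun x => ?_)
  exact exists_congr fun w => and_congr mem_shadowPts_iff eq_comm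

theorem restrictScalars_ShadowSub (F : StackyFan d k) (χ ξ : Fin d → ℝ) :
    (ShadowSub F χ ξ).restrictScalars ℂ =
      Submodule.span ℂ (Mgen F χ '' {w | PointsInto F ξ (intPt w.1 + χ)}) := by
  rw [ShadowSub_eq_span, ← Submodule.span_smul_of_span_eq_top (span_range_Rgen F)]
  refine le_antisymm (Submodule.span_le.2 ?_) (Submodule.span_mono ?_)
  · rintro _ ⟨_, ⟨a, rfl⟩, _, ⟨w, hw, rfl⟩, rfl⟩
    by_cases haw : commonCone F (intPt a) (intPt w + χ)
    · refine Submodule.subset_span ⟨translate a w, ?_, (Rgen_smul_Mgen_of_commonCone haw rfl).symm⟩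
      rw [Set.mem_ofPred_eq, intPt_translate]
      exact hw.add_left a.2
    · change Rgen F a • Mgen F χ w ∈ _
      rw [Rgen_smul_Mgen_of_not_commonCone haw]
      exact Submodule.zero_mem _
  · exact fun x hx => ⟨1, ⟨_, Rgen_zero F⟩, x, hx, one_smul _ x⟩

/-- The lattice point `b.point m`, as an index of the basis of `ℂ[𝚺;χ]`. -/
def FanBox.ppts (b : FanBox F q χ) (m : Fin d →₀ ℕ) : Ppts F.v χ :=
  ⟨b.point m, realCone_subset_Kcone F.v _ (b.halfOpen_point m).mem_realCone⟩

theorem FanBox.ppts_injective :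
    Function.Injective fun p : Σ _ : FanBox F q χ, (Fin d →₀ ℕ) => p.1.ppts p.2 :=
  fun _ _ h => FanBox.point_injective (congrArg Subtype.val h)

theorem range_ppts (hq : ∀ x, PointsInto F ξ x ↔ ∃ σ : FullCone F, σ.HalfOpen q x) :
    (Set.range fun p : Σ _ : FanBox F q χ, (Fin d →₀ ℕ) => p.1.ppts p.2) =
      {w | PointsInto F ξ (intPt w.1 + χ)} := by
  refine Set.Subset.antisymm ?_ fun w hw => ?_
  · rintro _ ⟨⟨b, m⟩, rfl⟩
    exact (hq _).2 ⟨b.1, b.halfOpen_point m⟩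
  · obtain ⟨σ, hσ⟩ := (hq _).1 hw
    obtain ⟨b, m, -, hbm⟩ := FanBox.exists_point_eq hσ
    exact ⟨⟨b, m⟩, Subtype.ext hbm⟩

/-- The basis of the shadow module given by the lattice points of the half-open cones, each of
which is a box point plus a combination of the generators with coefficients in `ℕ`. -/
noncomputable def shadowBasis (hF : support F = Kcone F.v)
    (hq : ∀ x, PointsInto F ξ x ↔ ∃ σ : FullCone F, σ.HalfOpen q x) :
    Module.Basis (Σ _ : FanBox F q χ, (Fin d →₀ ℕ)) ℂ (ShadowSub F χ ξ) :=
  (Module.Basis.span ((linearIndependent_Mgen hF χ).comp _ FanBox.ppts_injective)).map <|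
    (LinearEquiv.ofEq _ _ (by
      rw [Set.range_comp, range_ppts hq, restrictScalars_ShadowSub])).trans
    (((ShadowSub F χ ξ).restrictScalarsEquiv ℂ).restrictScalars ℂ)

variable {hF : support F = Kcone F.v}
  {hq : ∀ x, PointsInto F ξ x ↔ ∃ σ : FullCone F, σ.HalfOpen q x}

theorem coe_shadowBasis (b : FanBox F q χ) (m : Fin d →₀ ℕ) :
    (shadowBasis hF hq ⟨b, m⟩ : Mmod F χ) = Mgen F χ (b.ppts m) :=
  congrArg Subtype.val
    (Module.Basis.span_apply ((linearIndependent_Mgen hF χ).comp _ FanBox.ppts_injective) ⟨b, m⟩)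

end ShadowBasis

section RayAction

variable {d k : ℕ} {F : StackyFan d k} {q ξ χ : Fin d → ℝ}

/-- The element `[vᵢ]` of `ℂ[𝚺]`. -/
noncomputable def rayGen (F : StackyFan d k) (i : Fin k) : Rring F :=
  Rgen F ⟨F.v i, v_mem_latticeK F.v i⟩

variable {hF : support F = Kcone F.v}
  {hq : ∀ x, PointsInto F ξ x ↔ ∃ σ : FullCone F, σ.HalfOpen q x}

theorem rayGen_ray_smul_shadowBasis (b : FanBox F q χ) (m : Fin d →₀ ℕ) (a : Fin d) :
    rayGen F (b.1.ray a) • shadowBasis hF hq ⟨b, m⟩ =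
      shadowBasis hF hq ⟨b, m + Finsupp.single a 1⟩ := by
  refine Subtype.ext ?_
  rw [Submodule.coe_smul, coe_shadowBasis, coe_shadowBasis]
  exact Rgen_smul_Mgen_of_commonCone
    ⟨b.1.1, b.1.2.1, intPt_mem_realCone (b.1.ray_mem a), (b.halfOpen_point m).mem_realCone⟩
    (b.point_add_single m a)

theorem rayGen_smul_shadowBasis_mem_span {rk : FullCone F → ℕ}
    (hrk : ∀ (σ τ : FullCone F) (x : Fin d → ℝ), σ.HalfOpen q x → x ∈ realCone F.v τ.1 →
      τ ≠ σ → rk τ < rk σ)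
    {i : Fin k} (hi : {i} ∈ F.cones) (hv : F.v i ≠ 0)
    {b : FanBox F q χ} (hib : i ∉ b.1.1) (m : Fin d →₀ ℕ) :
    rayGen F i • shadowBasis hF hq ⟨b, m⟩ ∈
      Submodule.span ℂ {n | ∃ c m', rk c.1 < rk b.1 ∧ n = shadowBasis hF hq ⟨c, m'⟩} := by
  by_cases hcommon : commonCone F (intPt (F.v i)) (intPt (b.point m) + χ)
  · have hinto : PointsInto F ξ (intPt (F.v i + b.point m) + χ) := by
      rw [intPt_add, add_assoc]
      exact ((hq _).2 ⟨b.1, b.halfOpen_point m⟩).add_left (v_mem_latticeK F.v i)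
    obtain ⟨τ, hτ⟩ := (hq _).1 hinto
    obtain ⟨c, m', rfl, hc⟩ := FanBox.exists_point_eq hτ
    obtain ⟨J, hJ, hvJ, hbJ⟩ := hcommon
    have hsum := hτ.mem_realCone
    rw [intPt_add, add_assoc] at hsum
    have hvc := F.mem_realCone_of_add_mem c.1.2.1 hJ hvJ hbJ hsum
    have hbc := F.mem_realCone_of_add_mem c.1.2.1 hJ hbJ hvJ (add_comm (intPt (F.v i)) _ ▸ hsum)
    have hne : c.1 ≠ b.1 := fun h => hib (h ▸ F.mem_of_intPt_mem_realCone c.1.2.1 hi hv hvc)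
    refine Submodule.subset_span ⟨c, m', hrk b.1 c.1 _ (b.halfOpen_point m) hbc hne, ?_⟩
    refine Subtype.ext ?_
    rw [Submodule.coe_smul, coe_shadowBasis, coe_shadowBasis]
    exact Rgen_smul_Mgen_of_commonCone ⟨J, hJ, hvJ, hbJ⟩ hc
  · have hzero : rayGen F i • shadowBasis hF hq ⟨b, m⟩ = 0 := by
      refine Subtype.ext ?_
      rw [Submodule.coe_smul, coe_shadowBasis]
      exact Rgen_smul_Mgen_of_not_commonCone hcommon
    rw [hzero]
    exact Submodule.zero_mem _

open Classical in
theorem Zelt_eq_sum_ray_add (σ : FullCone F) (g : (Fin d → ℤ) →ₗ[ℤ] ℤ) :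
    Zelt F g = ∑ a, ((g (F.v (σ.ray a)) : ℤ) : ℂ) • rayGen F (σ.ray a) +
      ∑ i with {i} ∈ F.cones ∧ i ∉ σ.1, ((g (F.v i) : ℤ) : ℂ) • rayGen F i := by
  have hσ : ({i | {i} ∈ F.cones ∧ i ∈ σ.1} : Finset (Fin k)) =
      Finset.univ.map σ.ray.toEmbedding := by
    rw [FullCone.ray, Finset.map_orderEmbOfFin_univ]
    ext i
    simp only [Finset.mem_filter_univ, and_iff_right_iff_imp]
    exact fun hi => F.downClosed σ.1 σ.2.1 _ (Finset.singleton_subset_iff.2 hi)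
  have hZ : Zelt F g = ∑ i with {i} ∈ F.cones, ((g (F.v i) : ℤ) : ℂ) • rayGen F i := by
    rw [Finset.sum_filter]
    exact Finset.sum_congr rfl fun i _ => if_congr Iff.rfl (Algebra.smul_def _ _).symm rfl
  rw [hZ, ← Finset.sum_filter_add_sum_filter_not _ (· ∈ σ.1), Finset.filter_filter,
    Finset.filter_filter, hσ, Finset.sum_map]
  rfl

theorem Zelt_smul_shadowBasis_sub_mem_span {rk : FullCone F → ℕ}
    (hrk : ∀ (σ τ : FullCone F) (x : Fin d → ℝ), σ.HalfOpen q x → x ∈ realCone F.v τ.1 →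
      τ ≠ σ → rk τ < rk σ)
    (hv : ∀ i, F.v i ≠ 0) (g : (Fin d → ℤ) →ₗ[ℤ] ℤ) (b : FanBox F q χ) (m : Fin d →₀ ℕ) :
    Zelt F g • shadowBasis hF hq ⟨b, m⟩ - ∑ a, ((g (F.v (b.1.ray a)) : ℤ) : ℂ) •
        shadowBasis hF hq ⟨b, m + Finsupp.single a 1⟩ ∈
      Submodule.span ℂ {n | ∃ c m', rk c.1 < rk b.1 ∧ n = shadowBasis hF hq ⟨c, m'⟩} := by
  classical
  rw [Zelt_eq_sum_ray_add b.1 g, add_smul, Finset.sum_smul, Finset.sum_smul]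
  simp only [smul_assoc, rayGen_ray_smul_shadowBasis, add_sub_cancel_left]
  refine Submodule.sum_mem _ fun i hi => Submodule.smul_mem _ _ ?_
  obtain ⟨hi, hib⟩ := (Finset.mem_filter_univ i).1 hi
  exact rayGen_smul_shadowBasis_mem_span hrk hi (hv i) hib m

end RayAction

section ShadowCount

variable {d k : ℕ} {g : Fin d → (Fin d → ℤ) →ₗ[ℤ] ℤ}

open Matrix

theorem isUnit_of_span_dual_eq_top {𝕜 n : Type*} [CommRing 𝕜] [Fintype n] [DecidableEq n]
    {g : n → (n → 𝕜) →ₗ[𝕜] 𝕜} (hg : Submodule.span 𝕜 (Set.range g) = ⊤) :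
    IsUnit (Matrix.of fun j a => g j (Pi.single a 1)) := by
  let e : ((n → 𝕜) →ₗ[𝕜] 𝕜) ≃ₗ[𝕜] n → 𝕜 := ((Pi.basisFun 𝕜 n).constr 𝕜).symm
  have hrow : (Matrix.of fun j a => g j (Pi.single a 1)).row = e ∘ g := by
    ext j a
    simp [e, Module.Basis.constr, Pi.basisFun_apply]
  rw [← vecMul_surjective_iff_isUnit, ← Matrix.coe_vecMulLinear, ← LinearMap.range_eq_top,
    range_vecMulLinear, hrow, Set.range_comp, ← LinearEquiv.coe_coe, ← Submodule.map_span, hg,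
    Submodule.map_top, LinearEquiv.range]

theorem FullCone.isUnit_det_pairing {F : StackyFan d k} (σ : FullCone F)
    (hg : Submodule.span ℤ (Set.range g) = ⊤) :
    IsUnit (Matrix.of fun j a => ((g j (F.v (σ.ray a)) : ℤ) : ℂ)).det := by
  have hmul : (Matrix.of fun j a => g j (F.v (σ.ray a))) =
      (Matrix.of fun j a => g j (Pi.single a 1)) * σ.rayMatrixᵀ := by
    ext j a
    rw [mul_apply, of_apply]
    conv_lhs => rw [pi_eq_sum_univ' (F.v (σ.ray a))]
    simp only [map_sum, map_smul, smul_eq_mul]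
    exact Finset.sum_congr rfl fun b _ => mul_comm _ _
  have hdet : (Matrix.of fun j a => g j (F.v (σ.ray a))).det ≠ 0 := by
    rw [hmul, det_mul, det_transpose]
    exact mul_ne_zero ((isUnit_iff_isUnit_det _).1 (isUnit_of_span_dual_eq_top hg)).ne_zero
      σ.det_rayMatrix_ne_zero
  refine isUnit_iff_ne_zero.2 ?_
  have := Int.cast_ne_zero (α := ℂ).2 hdet
  rwa [Int.cast_det] at this

theorem finrank_ShadowSub_quotient (S : GKZSetting d k)
    (hg : Submodule.span ℤ (Set.range g) = ⊤) (χ ξ : Fin d → ℝ) :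
    Module.finrank ℂ (ShadowSub S.F χ ξ ⧸
        (Zideal S.F g • (⊤ : Submodule (Rring S.F) (ShadowSub S.F χ ξ)))) =
      ∑ σ : FullCone S.F, σ.rayMatrix.det.natAbs := by
  have hv (i : Fin k) : S.F.v i ≠ 0 := fun h => by simpa [h] using S.hdeg i
  obtain ⟨q, hq⟩ :=
    exists_pointsInto_iff_exists_halfOpen (coneSpan_univ_eq_top S.hgen) S.hsupp ξ
  obtain ⟨rk, hrk⟩ := S.exists_rank q
  have hZ : Zideal S.F g = Ideal.span (Set.range fun j => Zelt S.F (g j)) :=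
    congrArg Ideal.span (Set.ext fun r => exists_congr fun j => eq_comm)
  rw [hZ, ← card_fanBox S.F q χ]
  exact finrank_quotient_span_smul_top_of_triangular (shadowBasis S.hsupp hq) (fun b => rk b.1)
    (fun j => Zelt S.F (g j)) (fun b => Matrix.of fun j a => ((g j (S.F.v (b.1.ray a)) : ℤ) : ℂ))
    (fun b => b.1.isUnit_det_pairing hg)
    fun j b m => Zelt_smul_shadowBasis_sub_mem_span hrk hv (g j) b m

end ShadowCount

section Volume

open MeasureTheory

/-- The corner simplex `{y ≥ 0, ∑ yᵢ ≤ r}` of size `r` in `ℝⁿ`. -/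
def cornerSimplex (n : ℕ) (r : ℝ) : Set (Fin n → ℝ) := {y | (∀ i, 0 ≤ y i) ∧ ∑ i, y i ≤ r}

theorem isClosed_cornerSimplex (n : ℕ) (r : ℝ) : IsClosed (cornerSimplex n r) := by
  simp only [cornerSimplex, Set.ofPred_and, Set.ofPred_forall]
  exact (isClosed_iInter fun i => isClosed_le continuous_const (continuous_apply i)).inter
    (isClosed_le (by fun_prop) continuous_const)

theorem cornerSimplex_eq_empty {n : ℕ} {r : ℝ} (hr : r < 0) : cornerSimplex n r = ∅ :=
  Set.eq_empty_of_forall_notMem fun _ hy =>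
    (hy.2.trans_lt hr).not_ge (Finset.sum_nonneg fun i _ => hy.1 i)

theorem cons_mem_cornerSimplex {n : ℕ} {r t : ℝ} {y : Fin n → ℝ} :
    (Fin.cons t y : Fin (n + 1) → ℝ) ∈ cornerSimplex (n + 1) r ↔
      0 ≤ t ∧ y ∈ cornerSimplex n (r - t) := by
  simp only [cornerSimplex, Set.mem_ofPred_eq, Fin.forall_fin_succ, Fin.sum_univ_succ,
    Fin.cons_zero, Fin.cons_succ, le_sub_iff_add_le', and_assoc]

theorem volume_cornerSimplex_succ (n : ℕ) (r : ℝ) :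
    volume (cornerSimplex (n + 1) r) =
      ∫⁻ t in Set.Icc 0 r, volume (cornerSimplex n (r - t)) := by
  have hmp := (volume_preserving_piFinSuccAbove (fun _ : Fin (n + 1) => ℝ) 0).symm
  rw [← hmp.measure_preimage_equiv, Measure.volume_eq_prod, Measure.prod_apply
    (hmp.measurable (isClosed_cornerSimplex _ _).measurableSet),
    ← lintegral_indicator measurableSet_Icc]
  refine lintegral_congr fun t => ?_
  have hslice : Prod.mk t ⁻¹' ((MeasurableEquiv.piFinSuccAbove (fun _ => ℝ) 0).symm ⁻¹'
      cornerSimplex (n + 1) r) = {y | 0 ≤ t ∧ y ∈ cornerSimplex n (r - t)} := by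
    ext y
    rw [Set.mem_ofPred_eq, ← cons_mem_cornerSimplex, ← Fin.insertNth_zero']
    rfl
  rw [hslice]
  by_cases ht : t ∈ Set.Icc 0 r
  · rw [Set.indicator_of_mem ht]
    simp only [ht.1, true_and, Set.ofPred_mem_eq]
  · rw [Set.indicator_of_notMem ht]
    convert measure_empty (μ := volume)
    refine Set.eq_empty_of_forall_notMem fun y hy => ?_
    have hr : r - t < 0 := sub_neg.2 (not_le.1 fun h => ht ⟨hy.1, h⟩)
    exact Set.notMem_empty y (cornerSimplex_eq_empty hr ▸ hy.2)

theorem lintegral_Icc_sub_pow_div_factorial (n : ℕ) {r : ℝ} (hr : 0 ≤ r) :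
    ∫⁻ t in Set.Icc 0 r, ENNReal.ofReal ((r - t) ^ n / n.factorial) =
      ENNReal.ofReal (r ^ (n + 1) / (n + 1).factorial) := by
  rw [← ofReal_integral_eq_lintegral_ofReal
    (ContinuousOn.integrableOn_Icc (by fun_prop : Continuous _).continuousOn)]
  · rw [integral_Icc_eq_integral_Ioc, ← intervalIntegral.integral_of_le hr,
      intervalIntegral.integral_div,
      intervalIntegral.integral_comp_sub_left (fun x => x ^ n) r, integral_pow, sub_self, sub_zero,
      zero_pow n.succ_ne_zero, sub_zero, div_div, Nat.factorial_succ]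
    push_cast
    rfl
  · refine (ae_restrict_iff' measurableSet_Icc).2 (Filter.Eventually.of_forall fun t ht => ?_)
    exact div_nonneg (pow_nonneg (sub_nonneg.2 ht.2) n) (Nat.cast_nonneg _)

theorem volume_cornerSimplex (n : ℕ) {r : ℝ} (hr : 0 ≤ r) :
    volume (cornerSimplex n r) = ENNReal.ofReal (r ^ n / n.factorial) := by
  induction n generalizing r with
  | zero =>
    have huniv : cornerSimplex 0 r = Set.univ := by
      ext y
      simp [cornerSimplex, hr]
    simp [huniv, volume_pi]
  | succ n ih =>
    rw [volume_cornerSimplex_succ, ← lintegral_Icc_sub_pow_div_factorial n hr]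
    exact setLIntegral_congr_fun measurableSet_Icc fun t ht => ih (sub_nonneg.2 ht.2)

variable {d k : ℕ}

theorem volume_realCone_eq_zero (v : Fin k → Fin d → ℤ) {I : Finset (Fin k)} (hI : I.card < d) :
    volume (realCone v I) = 0 :=
  measure_mono_null (realCone_subset_coneSpan v I)
    (Measure.addHaar_submodule volume _ (coneSpan_ne_top v hI))

theorem FullCone.det_equivFun_symm {F : StackyFan d k} (σ : FullCone F) :
    LinearMap.det (σ.basis.equivFun.symm : (Fin d → ℝ) →ₗ[ℝ] Fin d → ℝ) = σ.rayMatrix.det := by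
  have hmatrix : LinearMap.toMatrix' (σ.basis.equivFun.symm : (Fin d → ℝ) →ₗ[ℝ] Fin d → ℝ) =
      (σ.rayMatrix.map (Int.cast : ℤ → ℝ)).transpose := by
    ext j a
    simp [LinearMap.toMatrix'_apply, rayMatrix, intPt, Pi.single_apply, ite_apply]
  rw [← LinearMap.det_toMatrix', hmatrix, Matrix.det_transpose, Int.cast_det]

variable {S : GKZSetting d k}

/-- The extension of the degree to `N ⊗ ℝ`. -/
noncomputable def GKZSetting.degReal (S : GKZSetting d k) : (Fin d → ℝ) →ₗ[ℝ] ℝ :=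
  Fintype.linearCombination ℝ fun j => (S.deg (Pi.single j 1) : ℝ)

theorem GKZSetting.degReal_intPt (S : GKZSetting d k) (n : Fin d → ℤ) :
    S.degReal (intPt n) = S.deg n := by
  conv_rhs => rw [pi_eq_sum_univ' n]
  simp only [map_sum, map_smul, smul_eq_mul, Int.cast_sum, Int.cast_mul]
  exact Fintype.linearCombination_apply ℝ _ _

/-- The part of degree at most `1` of a full-dimensional cone: the simplex spanned by the origin
and the generators of the cone. -/
def FullCone.simplex (σ : FullCone S.F) : Set (Fin d → ℝ) :=
  realCone S.F.v σ.1 ∩ {x | S.degReal x ≤ 1}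

namespace FullCone

theorem simplex_eq_preimage_cornerSimplex (σ : FullCone S.F) :
    σ.simplex = σ.basis.equivFun ⁻¹' cornerSimplex d 1 := by
  ext x
  have hdeg : S.degReal x = ∑ a, σ.basis.repr x a := by
    conv_lhs => rw [← σ.basis.sum_repr x]
    simp [S.degReal_intPt, S.hdeg]
  exact and_congr mem_realCone_iff_repr_nonneg (by rw [Set.mem_ofPred_eq, hdeg]; rfl)

theorem measurableSet_simplex (σ : FullCone S.F) : MeasurableSet σ.simplex := by
  rw [simplex_eq_preimage_cornerSimplex]
  exact (LinearMap.continuous_of_finiteDimensional σ.basis.equivFun.toLinearMap).measurable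
    (isClosed_cornerSimplex d 1).measurableSet

theorem factorial_mul_volume_simplex (σ : FullCone S.F) :
    (d.factorial : ℝ≥0∞) * volume σ.simplex = σ.rayMatrix.det.natAbs := by
  rw [simplex_eq_preimage_cornerSimplex, Measure.addHaar_preimage_linearEquiv, det_equivFun_symm,
    volume_cornerSimplex d zero_le_one, ← ENNReal.ofReal_natCast d.factorial,
    ← ENNReal.ofReal_mul (abs_nonneg _), ← ENNReal.ofReal_mul (Nat.cast_nonneg _), one_pow,
    mul_left_comm, mul_one_div_cancel (Nat.cast_ne_zero.2 d.factorial_ne_zero), mul_one,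
    ← Int.cast_abs, Int.abs_eq_natAbs, Int.cast_natCast, ENNReal.ofReal_natCast]

theorem aedisjoint_simplex {σ τ : FullCone S.F} (h : σ ≠ τ) :
    AEDisjoint volume σ.simplex τ.simplex := by
  have hcard : (σ.1 ∩ τ.1).card < d := by
    refine (Finset.card_lt_card ?_).trans_eq σ.2.2
    exact Finset.inter_subset_left.ssubset_of_ne
      fun he => h (eq_of_subset (Finset.inter_eq_left.1 he))
  refine measure_mono_null ?_ (volume_realCone_eq_zero S.F.v hcard)
  rw [← S.F.inter _ σ.2.1 _ τ.2.1]
  exact Set.inter_subset_inter Set.inter_subset_left Set.inter_subset_left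

end FullCone

theorem degBody_ae_eq_iUnion_simplex (S : GKZSetting d k) :
    degBody S =ᵐ[volume] ⋃ σ : FullCone S.F, σ.simplex := by
  refine (ae_le_set.2 ?_).antisymm (LE.le.eventuallyLE ?_)
  · refine measure_mono_null (t := ⋃ J ∈ {J ∈ S.F.cones | J.card < d}, realCone S.F.v J) ?_
      (measure_iUnion_null fun J => measure_iUnion_null fun hJ =>
        volume_realCone_eq_zero S.F.v (Finset.mem_filter.1 hJ).2)
    rintro x ⟨⟨hx, hdeg⟩, hnot⟩
    obtain ⟨J, hJ, hxJ⟩ := Set.mem_iUnion₂.1 (S.hsupp ▸ hx : x ∈ support S.F)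
    refine Set.mem_iUnion₂.2 ⟨J, Finset.mem_filter.2 ⟨hJ, ?_⟩, hxJ⟩
    refine (S.F.card_le hJ).lt_of_ne fun hcard =>
      hnot (Set.mem_iUnion.2 ⟨⟨J, hJ, hcard⟩, hxJ, hdeg⟩)
  · exact Set.iUnion_subset fun σ => Set.inter_subset_inter_left _ (realCone_subset_Kcone _ _)

theorem sum_natAbs_det_eq_factorial_mul_volume (S : GKZSetting d k) :
    ((∑ σ : FullCone S.F, σ.rayMatrix.det.natAbs : ℕ) : ℝ≥0∞) =
      d.factorial * volume (degBody S) := by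
  rw [measure_congr (degBody_ae_eq_iUnion_simplex S),
    measure_iUnion₀ (fun _ _ h => FullCone.aedisjoint_simplex h)
      fun σ => σ.measurableSet_simplex.nullMeasurableSet, tsum_fintype, Finset.mul_sum]
  simp only [FullCone.factorial_mul_volume_simplex, Nat.cast_sum]

end Volume

section Transfer

theorem finrank_quotient_smul_top_congr {K R M N : Type*} [Field K] [CommRing R] [Algebra K R]
    [AddCommGroup M] [Module R M] [Module K M] [IsScalarTower K R M] [AddCommGroup N] [Module R N]
    [Module K N] [IsScalarTower K R N] (e : M ≃ₗ[R] N) (I : Ideal R) :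
    Module.finrank K (M ⧸ (I • (⊤ : Submodule R M))) =
      Module.finrank K (N ⧸ (I • (⊤ : Submodule R N))) := by
  have hmap : (I • (⊤ : Submodule R M)).map (e : M →ₗ[R] N) = I • (⊤ : Submodule R N) := by
    rw [Submodule.map_smul'', Submodule.map_top, LinearEquiv.range]
  exact ((Submodule.Quotient.equiv _ _ e hmap).restrictScalars K).finrank_eq

variable {d k : ℕ} {F : StackyFan d k}

theorem span_range_Mgen (F : StackyFan d k) (χ : Fin d → ℝ) :
    Submodule.span (Rring F) (Set.range (Mgen F χ)) = ⊤ := by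
  have hMgen : Mgen F χ = Submodule.mkQ _ ∘ fun w => Finsupp.single w (1 : Rring F) := rfl
  rw [hMgen, Set.range_comp, ← Submodule.map_span, ← Finsupp.coe_basisSingleOne,
    Module.Basis.span_eq, Submodule.map_top, Submodule.range_mkQ]

theorem ShadowSub_zero (F : StackyFan d k) (χ : Fin d → ℝ) : ShadowSub F χ 0 = ⊤ := by
  rw [ShadowSub_eq_span, ← span_range_Mgen, ← Set.image_univ]
  congr 2
  refine Set.eq_univ_of_forall fun w => ⟨w.2, Filter.Eventually.of_forall fun ε => ?_⟩
  rw [smul_zero, add_zero]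
  exact w.2

theorem mem_Ppts_zero {n : Fin d → ℤ} : n ∈ Ppts F.v 0 ↔ n ∈ latticeK F.v := by
  change intPt n + 0 ∈ Kcone F.v ↔ intPt n ∈ Kcone F.v
  rw [add_zero]

/-- The canonical map `ℂ[𝚺;0] → ℂ[𝚺]`. -/
noncomputable def MmodZeroToRring (F : StackyFan d k) : Mmod F 0 →ₗ[Rring F] Rring F :=
  Submodule.liftQ _ (Finsupp.linearCombination (Rring F)
    fun w : Ppts F.v 0 => Rgen F ⟨w, mem_Ppts_zero.1 w.2⟩) <| Submodule.span_le.2 <| by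
  have hzero (w : Fin d → ℤ) : (fun j => (w j : ℝ) + (0 : Fin d → ℝ) j) = intPt w :=
    add_zero (intPt w)
  rintro _ (⟨a, w, w', haw, hw', rfl⟩ | ⟨a, w, haw, rfl⟩)
  · rw [hzero] at haw
    rw [SetLike.mem_coe, LinearMap.mem_ker, map_sub, Finsupp.linearCombination_single,
      Finsupp.linearCombination_single, one_smul, smul_eq_mul, sub_eq_zero]
    exact Rgen_mul_of_commonCone haw hw'
  · rw [hzero] at haw
    rw [SetLike.mem_coe, LinearMap.mem_ker, Finsupp.linearCombination_single, smul_eq_mul]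
    exact Rgen_mul_of_not_commonCone haw

theorem MmodZeroToRring_Mgen (w : Ppts F.v 0) :
    MmodZeroToRring F (Mgen F 0 w) = Rgen F ⟨w, mem_Ppts_zero.1 w.2⟩ :=
  (Finsupp.linearCombination_single (Rring F) 1 w).trans (one_smul _ _)

/-- The isomorphism `ℂ[𝚺] ≃ ℂ[𝚺;0]` sending `1` to `[0]`. -/
noncomputable def RringEquivMmodZero (hF : support F = Kcone F.v) :
    Rring F ≃ₗ[Rring F] Mmod F 0 :=
  LinearEquiv.ofLinearMap
    (LinearMap.toSpanSingleton _ _ (Mgen F 0 ⟨0, mem_Ppts_zero.2 (zero_mem_latticeK F.v)⟩))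
    (MmodZeroToRring F)
    (LinearMap.ext_on_range (span_range_Mgen F 0) fun w => by
      rw [LinearMap.comp_apply, MmodZeroToRring_Mgen, LinearMap.toSpanSingleton_apply]
      refine Rgen_smul_Mgen_of_commonCone ?_ (add_zero _).symm
      rw [intPt_zero, add_zero]
      obtain ⟨I, hI, h0, hw⟩ := commonCone_zero_left hF (mem_Ppts_zero.1 w.2)
      exact ⟨I, hI, hw, h0⟩)
    (LinearMap.ext_ring <| by
      rw [LinearMap.comp_apply, LinearMap.toSpanSingleton_apply, one_smul, MmodZeroToRring_Mgen]
      exact Rgen_zero F)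

theorem finrank_Mmod_quotient (F : StackyFan d k) (I : Ideal (Rring F)) (χ : Fin d → ℝ) :
    Module.finrank ℂ (Mmod F χ ⧸ (I • (⊤ : Submodule (Rring F) (Mmod F χ)))) =
      Module.finrank ℂ (ShadowSub F χ 0 ⧸
        (I • (⊤ : Submodule (Rring F) (ShadowSub F χ 0)))) :=
  (finrank_quotient_smul_top_congr (LinearEquiv.ofTop _ (ShadowSub_zero F χ)) I).symm

theorem finrank_Rring_quotient (hF : support F = Kcone F.v) (I : Ideal (Rring F)) :
    Module.finrank ℂ (Rring F ⧸ I) =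
      Module.finrank ℂ (Mmod F 0 ⧸ (I • (⊤ : Submodule (Rring F) (Mmod F 0)))) := by
  rw [← finrank_quotient_smul_top_congr (RringEquivMmodZero hF) I, smul_eq_mul, Ideal.mul_top]

end Transfer

end GKZpaper

namespace GKZpaper

/-- **Corollary 4.3.** The quotients `ℂ[𝚺]/Z⬝ℂ[𝚺] = Hℂ(𝚺;0)`, `ℂ[𝚺;χ]/Z⬝ℂ[𝚺;χ] = Hℂ(𝚺;χ)`
and `ℂ[𝚺;χ]_ξ/Z⬝ℂ[𝚺;χ]_ξ` all have dimension (over `ℂ`) equal to the normalized volume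
of `Δ`. -/
theorem statement12 (S : GKZSetting d k)
    (g : Fin d → ((Fin d → ℤ) →ₗ[ℤ] ℤ))
    (hg : Submodule.span ℤ (Set.range g) = ⊤)
    (χ ξ : Fin d → ℝ) :
    ((Module.finrank ℂ (Rring S.F ⧸ Zideal S.F g) : ℝ≥0∞) =
      (Nat.factorial d : ℝ≥0∞) * MeasureTheory.volume (degBody S)) ∧
    ((Module.finrank ℂ
        (Mmod S.F χ ⧸ (Zideal S.F g • (⊤ : Submodule (Rring S.F) (Mmod S.F χ)))) : ℝ≥0∞) =
      (Nat.factorial d : ℝ≥0∞) * MeasureTheory.volume (degBody S)) ∧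
    ((Module.finrank ℂ
        (↥(ShadowSub S.F χ ξ) ⧸
          (Zideal S.F g • (⊤ : Submodule (Rring S.F) ↥(ShadowSub S.F χ ξ)))) : ℝ≥0∞) =
      (Nat.factorial d : ℝ≥0∞) * MeasureTheory.volume (degBody S)) := by
  rw [finrank_Rring_quotient S.hsupp, finrank_Mmod_quotient, finrank_Mmod_quotient,
    finrank_ShadowSub_quotient S hg, finrank_ShadowSub_quotient S hg,
    finrank_ShadowSub_quotient S hg, sum_natAbs_det_eq_factorial_mul_volume]
  exact ⟨rfl, rfl, rfl⟩

end GKZpaper
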